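/- arXiv:1710.07688 — 3 statements merged into one kernel-verified Lean document; each statement's English description precedes it below -/
import Mathlib

section
/- Let X be a smooth vector field on ℝ^n whose flow map (t,x) ↦ e^{tX}(x) is defined for all t ∈ ℝ and is a polynomial in t and x (of some bounded degree). Then X is divergence-free, and the flow e^{tX} is volume-preserving: det D_x e^{tX}(x) = 1 for all t, x. -/
open MvPolynomial in
theorem MvPolynomial.hasFDerivAt_eval {σ : Type*} [Fintype σ] (p : MvPolynomial σ ℝ) (y : σ → ℝ) :
    HasFDerivAt (fun z : σ → ℝ => eval z p)
      (∑ i, eval y (pderiv i p) • ContinuousLinearMap.proj (R := ℝ) (φ := fun _ : σ => ℝ) i) y := by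
  classical
  induction p using MvPolynomial.induction_on with
  | C a => simpa using hasFDerivAt_const a y
  | add p q hp hq =>
    simpa [add_smul, Finset.sum_add_distrib] using hp.fun_add hq
  | mul_X p i hp =>
    have hi : HasFDerivAt (fun z : σ → ℝ => z i)
        (ContinuousLinearMap.proj (R := ℝ) (φ := fun _ : σ => ℝ) i) y := hasFDerivAt_apply i y
    simp only [map_mul, eval_X]
    refine (hp.fun_mul hi).congr_fderiv ?_
    ext v
    simp [Derivation.leibniz, pderiv_X, Pi.single_apply, apply_ite, add_mul,
      Finset.sum_add_distrib, Finset.mul_sum, mul_assoc]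

theorem MvPolynomial.pderiv_comm {σ R : Type*} [CommRing R] (i j : σ) (p : MvPolynomial σ R) :
    pderiv i (pderiv j p) = pderiv j (pderiv i p) := by
  classical
  have h : ⁅pderiv (R := R) i, pderiv (R := R) j⁆ = 0 := by
    refine derivation_ext fun k => ?_
    simp [Derivation.commutator_apply, pderiv_X, Pi.single_apply, apply_ite]
  have := congrArg (fun D => D p) h
  simpa [Derivation.commutator_apply, sub_eq_zero] using this

section SpatialJacobian

open MvPolynomial

variable {n : ℕ}

/-- The Jacobian matrix, in the space variables, of a polynomial family of maps. -/
noncomputable def spatialJacobian (p : Fin n → MvPolynomial (Fin n ⊕ Unit) ℝ) :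
    Matrix (Fin n) (Fin n) (MvPolynomial (Fin n ⊕ Unit) ℝ) :=
  Matrix.of fun i j => pderiv (Sum.inl j) (p i)

theorem hasFDerivAt_of_eq_eval {p : Fin n → MvPolynomial (Fin n ⊕ Unit) ℝ} {t : ℝ}
    {f : (Fin n → ℝ) → Fin n → ℝ} (hf : ∀ x i, f x i = eval (Sum.elim x fun _ => t) (p i))
    (x : Fin n → ℝ) :
    HasFDerivAt f (LinearMap.toContinuousLinearMap
      (Matrix.toLin' ((spatialJacobian p).map (eval (Sum.elim x fun _ => t))))) x := by
  rw [hasFDerivAt_pi']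
  intro i
  have hg : HasFDerivAt (fun x : Fin n → ℝ => (Sum.elim x fun _ => t : Fin n ⊕ Unit → ℝ))
      (ContinuousLinearMap.pi (Sum.elim
        (fun j => ContinuousLinearMap.proj (R := ℝ) (φ := fun _ : Fin n => ℝ) j) fun _ => 0)) x := by
    rw [hasFDerivAt_pi]
    rintro (j | j)
    · exact hasFDerivAt_apply j x
    · exact hasFDerivAt_const t x
  simp only [hf]
  refine ((hasFDerivAt_eval (p i) _).comp x hg).congr_fderiv ?_
  ext v
  simp [spatialJacobian, Matrix.mulVec, dotProduct]

theorem hasDerivAt_eval_time (p : MvPolynomial (Fin n ⊕ Unit) ℝ) (x : Fin n → ℝ) (t : ℝ) :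
    HasDerivAt (fun s => eval (Sum.elim x fun _ => s) p)
      (eval (Sum.elim x fun _ => t) (pderiv (Sum.inr ()) p)) t := by
  have hg : HasDerivAt (fun s : ℝ => (Sum.elim x fun _ => s : Fin n ⊕ Unit → ℝ))
      (Sum.elim 0 fun _ => 1) t := by
    rw [hasDerivAt_pi]
    rintro (j | j)
    · exact hasDerivAt_const t (x j)
    · exact hasDerivAt_id t
  refine ((hasFDerivAt_eval p _).comp_hasDerivAt t hg).congr_deriv ?_
  simp

theorem det_fderiv_of_eq_eval {p : Fin n → MvPolynomial (Fin n ⊕ Unit) ℝ} {t : ℝ}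
    {f : (Fin n → ℝ) → Fin n → ℝ} (hf : ∀ x i, f x i = eval (Sum.elim x fun _ => t) (p i))
    (x : Fin n → ℝ) :
    LinearMap.det (fderiv ℝ f x).toLinearMap =
      eval (Sum.elim x fun _ => t) (spatialJacobian p).det := by
  rw [(hasFDerivAt_of_eq_eval hf x).fderiv, LinearMap.coe_toContinuousLinearMap,
    LinearMap.det_toLin', RingHom.map_det, RingHom.mapMatrix_apply]

theorem trace_fderiv_of_eq_eval {p : Fin n → MvPolynomial (Fin n ⊕ Unit) ℝ} {t : ℝ}
    {f : (Fin n → ℝ) → Fin n → ℝ} (hf : ∀ x i, f x i = eval (Sum.elim x fun _ => t) (p i))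
    (x : Fin n → ℝ) :
    LinearMap.trace ℝ (Fin n → ℝ) (fderiv ℝ f x).toLinearMap =
      ((spatialJacobian p).map (eval (Sum.elim x fun _ => t))).trace := by
  rw [(hasFDerivAt_of_eq_eval hf x).fderiv, LinearMap.coe_toContinuousLinearMap,
    Matrix.trace_toLin'_eq]

end SpatialJacobian

theorem Matrix.hasDerivAt_det_of_eq_one {ι : Type*} [Fintype ι] [DecidableEq ι]
    {M : ℝ → Matrix ι ι ℝ} {M' : Matrix ι ι ℝ} {t : ℝ} (h1 : M t = 1)
    (hM : ∀ i j, HasDerivAt (fun s => M s i j) (M' i j) t) :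
    HasDerivAt (fun s => (M s).det) M'.trace t := by
  have hdet : DifferentiableAt ℝ (fun A : ι → ι → ℝ => (Matrix.of A).det)
      (fun i j => (1 : Matrix ι ι ℝ) i j) := by
    simp only [Matrix.det_apply, Matrix.of_apply]
    fun_prop
  have chain {N : ℝ → Matrix ι ι ℝ} {s : ℝ} (hN1 : N s = 1)
      (hN : ∀ i j, HasDerivAt (fun s => N s i j) (M' i j) s) :
      HasDerivAt (fun s => (N s).det) (fderiv ℝ (fun A : ι → ι → ℝ => (Matrix.of A).det)
        (fun i j => (1 : Matrix ι ι ℝ) i j) (fun i j => M' i j)) s := by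
    have hN' : HasDerivAt (fun s => (fun i j => N s i j)) (fun i j => M' i j) s :=
      hasDerivAt_pi.2 fun i => hasDerivAt_pi.2 fun j => hN i j
    exact (hdet.hasFDerivAt).comp_hasDerivAt_of_eq s hN' (by rw [hN1])
  have hline : HasDerivAt (fun s : ℝ => (1 + s • M').det) M'.trace 0 := by
    rw [funext fun s : ℝ => Matrix.det_one_add_smul s M']
    refine HasDerivAt.congr_deriv (((hasDerivAt_id (0 : ℝ)).const_mul M'.trace |>.const_add 1).add
      ((Polynomial.hasDerivAt _ (0 : ℝ)).mul (hasDerivAt_pow 2 (0 : ℝ)))) ?_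
    simp
  have hline' := chain (N := fun s => 1 + s • M') (s := 0) (by simp) fun i j => by
    simpa using ((hasDerivAt_id (0 : ℝ)).mul_const (M' i j)).const_add ((1 : Matrix ι ι ℝ) i j)
  rw [hline.unique hline']
  exact chain h1 hM

theorem eq_of_hasDerivAt_of_contDiff {E : Type*} [NormedAddCommGroup E] [NormedSpace ℝ E]
    [CompleteSpace E] {X : E → E} (hX : ContDiff ℝ 1 X) {γ γ' : ℝ → E}
    (hγ : ∀ t, HasDerivAt γ (X (γ t)) t) (hγ' : ∀ t, HasDerivAt γ' (X (γ' t)) t) {t₀ : ℝ}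
    (h : γ t₀ = γ' t₀) : γ = γ' := by
  refine isMIntegralCurve_Ioo_eq_of_contMDiff_boundaryless (I := modelWithCornersSelf ℝ E)
    (v := X) (t₀ := t₀) ?_ ?_ ?_ h
  · exact contMDiff_vectorSpace_iff_contDiff.2 hX
  · exact fun t => (hγ t).hasFDerivAt.hasMFDerivAt
  · exact fun t => (hγ' t).hasFDerivAt.hasMFDerivAt

theorem flow_neg_flow {E : Type*} [NormedAddCommGroup E] [NormedSpace ℝ E]
    [CompleteSpace E] {X : E → E} (hX : ContDiff ℝ 1 X) {φ : ℝ → E → E}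
    (hflow0 : ∀ x, φ 0 x = x) (hflow : ∀ t x, HasDerivAt (fun s => φ s x) (X (φ t x)) t)
    (t : ℝ) (x : E) : φ (-t) (φ t x) = x := by
  have h := eq_of_hasDerivAt_of_contDiff hX (γ := fun s => φ s (φ t x))
    (γ' := fun s => φ (s + t) x) (t₀ := 0) (fun s => hflow s _)
    (fun s => (hflow (s + t) x).comp_add_const s t) (by simp [hflow0])
  simpa [hflow0] using congrFun h (-t)

/-- A smooth vector field on `ℝ^n` whose flow is polynomial in `(t,x)` is divergence-free, and its
flow is volume-preserving: the spatial Jacobian determinant of the flow is identically `1`. -/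
theorem stmt8 (n : ℕ) (X : (Fin n → ℝ) → (Fin n → ℝ))
    (hX : ContDiff ℝ (⊤ : ℕ∞) X)
    (φ : ℝ → (Fin n → ℝ) → (Fin n → ℝ))
    (hflow0 : ∀ x, φ 0 x = x)
    (hflow : ∀ t x, HasDerivAt (fun s => φ s x) (X (φ t x)) t)
    (hpoly : ∃ p : Fin n → MvPolynomial (Fin n ⊕ Unit) ℝ,
      ∀ t x i, φ t x i = MvPolynomial.eval (Sum.elim x fun _ => t) (p i)) :
    (∀ x, LinearMap.trace ℝ (Fin n → ℝ) (fderiv ℝ X x).toLinearMap = 0) ∧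
    (∀ t x, LinearMap.det (fderiv ℝ (φ t) x).toLinearMap = 1) := by
  obtain ⟨p, hp⟩ := hpoly
  have hX1 : ContDiff ℝ 1 X := hX.of_le (by exact_mod_cast le_top)
  have hdet t x := det_fderiv_of_eq_eval (hp t) x
  have hid : φ 0 = id := funext hflow0
  have hmul t x : LinearMap.det (fderiv ℝ (φ (-t)) (φ t x)).toLinearMap *
      LinearMap.det (fderiv ℝ (φ t) x).toLinearMap = 1 := by
    have hcomp := ((hasFDerivAt_of_eq_eval (hp (-t)) (φ t x)).differentiableAt.hasFDerivAt).comp x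
      (hasFDerivAt_of_eq_eval (hp t) x).differentiableAt.hasFDerivAt
    have heq : φ (-t) ∘ φ t = id := funext (flow_neg_flow hX1 hflow0 hflow t)
    rw [heq] at hcomp
    rw [← LinearMap.det_comp, ← ContinuousLinearMap.toLinearMap_comp,
      hcomp.unique (hasFDerivAt_id x)]
    exact LinearMap.det_id
  have hunit : IsUnit (spatialJacobian p).det := by
    refine IsUnit.of_mul_eq_one_right (MvPolynomial.bind₁
      (Sum.elim p fun _ => -MvPolynomial.X (Sum.inr ())) (spatialJacobian p).det) ?_
    refine MvPolynomial.funext fun y => ?_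
    obtain ⟨x, t, rfl⟩ : ∃ (x : Fin n → ℝ) (t : ℝ), y = Sum.elim x fun _ => t :=
      ⟨fun i => y (Sum.inl i), y (Sum.inr ()), by ext (i | i) <;> rfl⟩
    have key := hmul t x
    rw [hdet, hdet] at key
    rw [map_mul, map_one, ← key]
    congr 1
    simp only [← MvPolynomial.coe_aeval_eq_eval, RingHom.coe_coe, MvPolynomial.aeval_bind₁]
    congr 2
    ext (i | i)
    · simp [hp t x i]
    · simp
  have hconst t x : LinearMap.det (fderiv ℝ (φ t) x).toLinearMap = 1 := by
    obtain ⟨c, -, hc⟩ := MvPolynomial.isUnit_iff_eq_C_of_isReduced.1 hunit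
    have h0 := hdet 0 x
    rw [hid, fderiv_id, hc, MvPolynomial.eval_C] at h0
    rw [hdet, hc, MvPolynomial.eval_C, ← h0]
    exact LinearMap.det_id
  refine ⟨fun x => ?_, hconst⟩
  have hXp (x : Fin n → ℝ) (i : Fin n) : X x i = MvPolynomial.eval (Sum.elim x fun _ => 0)
      (MvPolynomial.pderiv (Sum.inr ()) (p i)) := by
    have h := hasDerivAt_pi.1 (hflow 0 x) i
    simp only [hp _ x i] at h
    rw [hflow0] at h
    exact h.unique (hasDerivAt_eval_time (p i) x 0)
  rw [trace_fderiv_of_eq_eval hXp x]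
  have hone : (spatialJacobian p).map (MvPolynomial.eval (Sum.elim x fun _ => (0 : ℝ))) = 1 := by
    have h := hasFDerivAt_of_eq_eval (hp 0) x
    rw [hid] at h
    refine Matrix.toLin'.injective (LinearMap.toContinuousLinearMap.injective ?_)
    rw [h.unique (hasFDerivAt_id x), Matrix.toLin'_one]
    rfl
  have hder := Matrix.hasDerivAt_det_of_eq_one
    (M := fun s => (spatialJacobian p).map (MvPolynomial.eval (Sum.elim x fun _ => s)))
    (M' := (spatialJacobian fun i => MvPolynomial.pderiv (Sum.inr ()) (p i)).map
      (MvPolynomial.eval (Sum.elim x fun _ => 0))) hone fun i j => by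
    simpa [spatialJacobian, MvPolynomial.pderiv_comm (Sum.inl j)] using
      hasDerivAt_eval_time (MvPolynomial.pderiv (Sum.inl j) (p i)) x 0
  refine hder.unique ((hasDerivAt_const (0 : ℝ) (1 : ℝ)).congr_of_eventuallyEq (.of_forall ?_))
  intro s
  rw [← hconst s x, hdet, RingHom.map_det, RingHom.mapMatrix_apply]
end

section
/- Let γ : ℝ → ℝ^n be a polynomial curve of degree at most N. For every ε ∈ (0, 1/(2N)), there exists a decomposition of ℝ into at most N'(N,n,ε) nonoverlapping open intervals I_1,...,I_{N'} (whose closures cover ℝ), with centers b_j ∉ I_j, such that for each j there is an integer k_j with |γ^{(k)}(b_j)(t-b_j)^k / k!| ≤ ε |γ^{(k_j)}(b_j)(t-b_j)^{k_j} / k_j!| for all k ≠ k_j, 0 ≤ k ≤ N, and all t ∈ I_j. In particular |γ(t)| is comparable to |γ^{(k_j)}(b_j)/k_j!| · |t-b_j|^{k_j} on I_j. -/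
open Polynomial in
/-- If every factor `X + a` has `r ≤ ‖a‖`, the coefficients of the product decay like `r⁻ᵏ`
relative to the constant term. -/
lemma norm_coeff_prod_X_add_C_le {r : ℝ} (hr : 0 ≤ r) (s : Multiset ℂ) (hs : ∀ a ∈ s, r ≤ ‖a‖)
    (k : ℕ) :
    ‖((s.map fun a => X + C a).prod).coeff k‖ * r ^ k ≤ 2 ^ s.card * ‖s.prod‖ := by
  induction s using Multiset.induction_on generalizing k with
  | empty =>
    rcases k with _ | k <;> simp [coeff_one]
  | cons a s ih =>
    have ha : r ≤ ‖a‖ := hs a (Multiset.mem_cons_self a s)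
    have ih' := ih fun b hb => hs b (Multiset.mem_cons_of_mem hb)
    simp only [Multiset.map_cons, Multiset.prod_cons, Multiset.card_cons, norm_mul]
    set Q := (s.map fun a => X + C a).prod
    have hP : 0 ≤ 2 ^ s.card * ‖s.prod‖ := by positivity
    have h0 := mul_le_mul_of_nonneg_left (ih' k) (norm_nonneg a)
    rcases k with _ | k
    · simp only [add_mul, coeff_add, mul_coeff_zero, coeff_X_zero, zero_mul, zero_add,
        norm_mul, coeff_C_zero] at h0 ⊢
      rw [pow_succ]
      nlinarith [mul_nonneg (norm_nonneg a) hP]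
    · have h1 := mul_le_mul_of_nonneg_left (ih' k) hr
      have h2 := mul_le_mul_of_nonneg_right ha hP
      rw [add_mul, coeff_add, coeff_X_mul, coeff_C_mul]
      have h3 := mul_le_mul_of_nonneg_right (norm_add_le (Q.coeff k) (a * Q.coeff (k + 1)))
        (pow_nonneg hr (k + 1))
      rw [norm_mul] at h3
      refine h3.trans ?_
      calc (‖Q.coeff k‖ + ‖a‖ * ‖Q.coeff (k + 1)‖) * r ^ (k + 1)
          = r * (‖Q.coeff k‖ * r ^ k) + ‖a‖ * (‖Q.coeff (k + 1)‖ * r ^ (k + 1)) := by ring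
        _ ≤ ‖a‖ * (2 ^ s.card * ‖s.prod‖) + ‖a‖ * (2 ^ s.card * ‖s.prod‖) := by linarith
        _ = 2 ^ (s.card + 1) * (‖a‖ * ‖s.prod‖) := by ring

open Polynomial in
lemma eval_iterate_derivative_eq_factorial_mul_taylor_coeff {R : Type*} [CommSemiring R]
    (P : R[X]) (x : R) (k : ℕ) :
    eval x (derivative^[k] P) = (k.factorial : R) * (taylor x P).coeff k := by
  have h := congrArg (eval x) (congrFun (factorial_smul_hasseDeriv (R := R) k) P)
  rw [taylor_coeff, ← h, LinearMap.smul_apply, eval_smul, nsmul_eq_mul]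

open Polynomial in
/-- If all complex roots of `P` are at distance at least `r` from the real point `x`, then the
Taylor coefficients of `P` at `x` are controlled by `P x`. -/
lemma abs_eval_iterate_derivative_le {N : ℕ} (P : ℝ[X]) (hP : P.natDegree ≤ N) {r x : ℝ}
    (hr : 0 ≤ r) (hroots : ∀ w ∈ P.aroots ℂ, r ≤ ‖(x : ℂ) - w‖) (k : ℕ) :
    |eval x (derivative^[k] P)| * r ^ k / (k.factorial : ℝ) ≤ 2 ^ N * |eval x P| := by
  set Q : ℂ[X] := P.map (algebraMap ℝ ℂ) with hQ
  have hfac : Q = C Q.leadingCoeff * (Q.roots.map fun a => X - C a).prod :=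
    (IsAlgClosed.splits Q).eq_prod_roots
  set s : Multiset ℂ := Q.roots.map fun w => (x : ℂ) - w with hs
  have htaylor : taylor (x : ℂ) Q = C Q.leadingCoeff * (s.map fun a => X + C a).prod := by
    conv_lhs => rw [hfac]
    rw [taylor_mul, taylor_C]
    congr 1
    rw [← taylorAlgHom_apply, map_multiset_prod, hs, Multiset.map_map, Multiset.map_map]
    congr 1
    refine Multiset.map_congr rfl fun w _ => ?_
    simp [taylorAlgHom_apply, taylor_X, add_sub_assoc]
  have hs' : ∀ a ∈ s, r ≤ ‖a‖ := by
    intro a ha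
    obtain ⟨w, hw, rfl⟩ := Multiset.mem_map.1 ha
    exact hroots w hw
  have hcard : s.card ≤ N := by
    rw [hs, Multiset.card_map]
    exact (card_roots' Q).trans (natDegree_map_le.trans hP)
  have hval : eval (x : ℂ) Q = Q.leadingCoeff * s.prod := by
    conv_lhs => rw [hfac]
    simp [eval_multiset_prod, hs, Multiset.map_map]
  have hevalk : ((eval x (derivative^[k] P) : ℝ) : ℂ)
      = (k.factorial : ℂ) * (taylor (x : ℂ) Q).coeff k := by
    rw [← eval_iterate_derivative_eq_factorial_mul_taylor_coeff, hQ, iterate_derivative_map]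
    exact (eval_map_apply (algebraMap ℝ ℂ) x).symm
  have hnorm : |eval x (derivative^[k] P)| = k.factorial * ‖(taylor (x : ℂ) Q).coeff k‖ := by
    rw [← Real.norm_eq_abs, ← Complex.norm_real, hevalk]; simp
  have hnorm0 : |eval x P| = ‖Q.leadingCoeff‖ * ‖s.prod‖ := by
    rw [← norm_mul, ← hval, hQ, ← Real.norm_eq_abs, ← Complex.norm_real]
    exact congrArg _ (eval_map_apply (algebraMap ℝ ℂ) x).symm
  have hk : (0 : ℝ) < k.factorial := by positivity
  rw [hnorm, hnorm0, htaylor, coeff_C_mul, norm_mul]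
  have := mul_le_mul_of_nonneg_left (norm_coeff_prod_X_add_C_le hr s hs' k)
    (norm_nonneg Q.leadingCoeff)
  have h2 : (2 : ℝ) ^ s.card ≤ 2 ^ N := pow_le_pow_right₀ (by norm_num) hcard
  have h3 := mul_le_mul_of_nonneg_right h2
    (mul_nonneg (norm_nonneg Q.leadingCoeff) (norm_nonneg s.prod))
  rw [div_le_iff₀ hk]
  nlinarith

/-- The open intervals complementary to a finite set of reals. -/
lemma exists_open_intervals_compl (F : Finset ℝ) :
    ∃ I : Fin (F.card + 1) → Set ℝ,
      (∀ j, IsOpen (I j)) ∧ (∀ j, (I j).OrdConnected) ∧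
      (Pairwise fun j j' => Disjoint (I j) (I j')) ∧
      (⋃ j, closure (I j)) = Set.univ ∧ ∀ j, ∀ x ∈ F, x ∉ I j := by
  classical
  let I : Option F → Set ℝ := fun o =>
    {t | (∀ x ∈ o, (x : ℝ) < t) ∧ ∀ y ∈ F, (∀ x ∈ o, (x : ℝ) < y) → t < y}
  have hopen : ∀ o, IsOpen (I o) := by
    intro o
    refine IsOpen.inter (s := {t : ℝ | ∀ x ∈ o, (x : ℝ) < t})
      (t := {t : ℝ | ∀ y ∈ F, (∀ x ∈ o, (x : ℝ) < y) → t < y}) ?_ ?_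
    · rcases o with _ | x
      · simp
      · simpa using! isOpen_Ioi (a := (x : ℝ))
    · have : {t : ℝ | ∀ y ∈ F, (∀ x ∈ o, (x : ℝ) < y) → t < y}
          = ⋂ y ∈ F.filter (fun y => ∀ x ∈ o, (x : ℝ) < y), Set.Iio y := by
        ext t; simp
      rw [this]
      exact isOpen_biInter_finset fun y _ => isOpen_Iio
  have hconn : ∀ o, (I o).OrdConnected := by
    intro o
    refine ⟨fun a ha c hc t ht => ⟨fun x hx => (ha.1 x hx).trans_le ht.1, fun y hy h => ?_⟩⟩
    exact ht.2.trans_lt (hc.2 y hy h)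
  have hdisj : ∀ o o', o ≠ o' → Disjoint (I o) (I o') := by
    intro o o' hne
    refine Set.disjoint_left.2 fun t h h' => ?_
    rcases o with _ | x <;> rcases o' with _ | x'
    · exact hne rfl
    · exact lt_asymm (h.2 x' x'.2 (by simp)) (h'.1 x' rfl)
    · exact lt_asymm (h'.2 x x.2 (by simp)) (h.1 x rfl)
    · rcases lt_trichotomy (x : ℝ) x' with hlt | heq | hlt
      · exact lt_asymm (h.2 x' x'.2 (by simpa using hlt)) (h'.1 x' rfl)
      · exact hne (congrArg some (Subtype.ext heq))
      · exact lt_asymm (h'.2 x x.2 (by simpa using hlt)) (h.1 x rfl)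
  have havoid : ∀ o, ∀ x ∈ F, x ∉ I o := by
    intro o x hx h
    exact lt_irrefl x (h.2 x hx h.1)
  have hcover : ∀ t, t ∉ F → ∃ o, t ∈ I o := by
    intro t ht
    by_cases hne : (F.filter (· < t)).Nonempty
    · obtain ⟨x, hx, hmax⟩ := (F.filter (· < t)).exists_max_image id hne
      rw [Finset.mem_filter] at hx
      refine ⟨some ⟨x, hx.1⟩, by simpa using hx.2, fun y hy hxy => ?_⟩
      by_contra! hyt
      have hyt' : y < t := lt_of_le_of_ne hyt fun h => ht (h ▸ hy)
      exact absurd (hmax y (Finset.mem_filter.2 ⟨hy, hyt'⟩)) (not_le.2 (hxy _ rfl))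
    · refine ⟨none, by simp, fun y hy _ => ?_⟩
      by_contra! hyt
      have hyt' : y < t := lt_of_le_of_ne hyt fun h => ht (h ▸ hy)
      exact hne ⟨y, Finset.mem_filter.2 ⟨hy, hyt'⟩⟩
  have e : Fin (F.card + 1) ≃ Option F := (Fintype.equivFinOfCardEq (by simp)).symm
  refine ⟨fun j => I (e j), fun j => hopen _, fun j => hconn _,
    fun j j' hne => hdisj _ _ (e.injective.ne hne), ?_, fun j => havoid _⟩
  rw [← closure_iUnion_of_finite, Set.eq_univ_iff_forall]
  have hd : Dense ((F : Set ℝ)ᶜ) := F.countable_toSet.dense_compl ℝ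
  refine fun t => closure_mono ?_ (hd t)
  intro t ht
  obtain ⟨o, ho⟩ := hcover t ht
  exact Set.mem_iUnion.2 ⟨e.symm o, by simpa using ho⟩

lemma Set.OrdConnected.subset_of_sSup_sInf_notMem {I J : Set ℝ} (hI : I.OrdConnected)
    (hJ : J.OrdConnected) {x : ℝ} (hxI : x ∈ I) (hxJ : x ∈ J) (hsup : sSup J ∉ I)
    (hinf : sInf J ∉ I) : I ⊆ J := by
  intro y hy
  by_contra hyJ
  rcases le_total x y with hxy | hyx
  · have hub : y ∈ upperBounds J := fun z hz => by
      by_contra! hyz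
      exact hyJ (hJ.out hxJ hz ⟨hxy, hyz.le⟩)
    exact hsup (hI.out hxI hy ⟨le_csSup ⟨y, hub⟩ hxJ, csSup_le ⟨x, hxJ⟩ hub⟩)
  · have hlb : y ∈ lowerBounds J := fun z hz => by
      by_contra! hzy
      exact hyJ (hJ.out hz hxJ ⟨hzy.le, hyx⟩)
    exact hinf (hI.out hy hxI ⟨le_csInf ⟨x, hxJ⟩ hlb, csInf_le ⟨y, hlb⟩ hxJ⟩)

/-- `S` is covered by at most `K` order-connected sets satisfying `G`. -/
def CoveredBy (G : Set ℝ → Prop) (K : ℕ) (S : Set ℝ) : Prop :=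
  ∃ 𝒥 : Finset (Set ℝ), 𝒥.card ≤ K ∧ (∀ J ∈ 𝒥, J.OrdConnected ∧ G J) ∧ ∀ t ∈ S, ∃ J ∈ 𝒥, t ∈ J

namespace CoveredBy

variable {G : Set ℝ → Prop} {K L : ℕ} {S T : Set ℝ}

lemma of_self (h : S.OrdConnected) (hG : G S) : CoveredBy G 1 S :=
  ⟨{S}, by simp, by simpa using ⟨h, hG⟩, fun t ht => ⟨S, by simp, ht⟩⟩

lemma subset (h : CoveredBy G K T) (hST : S ⊆ T) : CoveredBy G K S := by
  obtain ⟨𝒥, h1, h2, h3⟩ := h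
  exact ⟨𝒥, h1, h2, fun t ht => h3 t (hST ht)⟩

lemma union (hS : CoveredBy G K S) (hT : CoveredBy G L T) : CoveredBy G (K + L) (S ∪ T) := by
  classical
  obtain ⟨𝒥, h1, h2, h3⟩ := hS
  obtain ⟨𝒥', h1', h2', h3'⟩ := hT
  refine ⟨𝒥 ∪ 𝒥', (Finset.card_union_le _ _).trans (add_le_add h1 h1'), ?_, ?_⟩
  · intro J hJ
    exact (Finset.mem_union.1 hJ).elim (h2 J) (h2' J)
  · rintro t (ht | ht)
    · obtain ⟨J, hJ, htJ⟩ := h3 t ht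
      exact ⟨J, Finset.mem_union_left _ hJ, htJ⟩
    · obtain ⟨J, hJ, htJ⟩ := h3' t ht
      exact ⟨J, Finset.mem_union_right _ hJ, htJ⟩

lemma biUnion {ι : Type*} (s : Finset ι) (S : ι → Set ℝ) (h : ∀ i ∈ s, CoveredBy G K (S i)) :
    CoveredBy G (s.card * K) (⋃ i ∈ s, S i) := by
  classical
  choose! 𝒥 h1 h2 h3 using h
  refine ⟨s.biUnion 𝒥, Finset.card_biUnion_le_card_mul _ _ _ h1, ?_, ?_⟩
  · intro J hJ
    obtain ⟨i, hi, hJ⟩ := Finset.mem_biUnion.1 hJ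
    exact h2 i hi J hJ
  · intro t ht
    obtain ⟨i, hi, ht⟩ := Set.mem_iUnion₂.1 ht
    obtain ⟨J, hJ, htJ⟩ := h3 i hi t ht
    exact ⟨J, Finset.mem_biUnion.2 ⟨i, hi, hJ⟩, htJ⟩

end CoveredBy

/-- The size at `t` of the degree `k` Taylor term of the curve `γ` about `b`. -/
noncomputable def taylorTermNorm {n : ℕ} (γ : Fin n → Polynomial ℝ) (b : ℝ) (k : ℕ) (t : ℝ) : ℝ :=
  ‖(fun i => Polynomial.eval b (Polynomial.derivative^[k] (γ i)) : Fin n → ℝ)‖ *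
    |t - b| ^ k / (k.factorial : ℝ)

/-- On `J` one Taylor term of `γ` about some center outside `J` dominates all the others. -/
def HasDominantTerm {n : ℕ} (γ : Fin n → Polynomial ℝ) (N : ℕ) (ε : ℝ) (J : Set ℝ) : Prop :=
  ∃ b ∉ J, ∃ κ ≤ N, ∀ t ∈ J, ∀ k ≤ N, k ≠ κ →
    taylorTermNorm γ b k t ≤ ε * taylorTermNorm γ b κ t

lemma HasDominantTerm.mono {n N : ℕ} {γ : Fin n → Polynomial ℝ} {ε : ℝ} {I J : Set ℝ}
    (hJ : HasDominantTerm γ N ε J) (hIJ : I ⊆ J) : HasDominantTerm γ N ε I := by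
  obtain ⟨b, hb, κ, hκ, h⟩ := hJ
  exact ⟨b, fun h' => hb (hIJ h'), κ, hκ, fun t ht => h t (hIJ ht)⟩

lemma hasDominantTerm_empty {n : ℕ} (γ : Fin n → Polynomial ℝ) (N : ℕ) (ε : ℝ) :
    HasDominantTerm γ N ε ∅ :=
  ⟨0, by simp, 0, Nat.zero_le N, by simp⟩

/-- A curve is its Taylor polynomial. -/
lemma eval_curve_eq_sum {n N : ℕ} (γ : Fin n → Polynomial ℝ) (hγ : ∀ i, (γ i).natDegree ≤ N)
    (b t : ℝ) :
    (fun i => Polynomial.eval t (γ i) : Fin n → ℝ) = ∑ k ∈ Finset.range (N + 1),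
      ((t - b) ^ k / (k.factorial : ℝ)) •
        (fun i => Polynomial.eval b (Polynomial.derivative^[k] (γ i)) : Fin n → ℝ) := by
  ext i
  simp only [Finset.sum_apply, Pi.smul_apply, smul_eq_mul]
  have h := Polynomial.taylor_eval_sub b (γ i) t
  rw [← h, Polynomial.eval_eq_sum_range' (n := N + 1)
    (by rw [Polynomial.natDegree_taylor]; exact Nat.lt_succ_of_le (hγ i))]
  refine Finset.sum_congr rfl fun k _ => ?_
  have hk : (k.factorial : ℝ) ≠ 0 := by positivity
  rw [eval_iterate_derivative_eq_factorial_mul_taylor_coeff]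
  field_simp

lemma norm_eval_curve_comparable {n N : ℕ} {γ : Fin n → Polynomial ℝ}
    (hγ : ∀ i, (γ i).natDegree ≤ N) {ε : ℝ} (hε : N * ε ≤ 1 / 2) {b t : ℝ} {κ : ℕ} (hκ : κ ≤ N)
    (h : ∀ k ≤ N, k ≠ κ → taylorTermNorm γ b k t ≤ ε * taylorTermNorm γ b κ t) :
    (1 / 2) * taylorTermNorm γ b κ t ≤ ‖(fun i => Polynomial.eval t (γ i) : Fin n → ℝ)‖ ∧
      ‖(fun i => Polynomial.eval t (γ i) : Fin n → ℝ)‖ ≤ (3 / 2) * taylorTermNorm γ b κ t := by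
  set v : ℕ → Fin n → ℝ := fun k => ((t - b) ^ k / (k.factorial : ℝ)) •
    (fun i => Polynomial.eval b (Polynomial.derivative^[k] (γ i)) : Fin n → ℝ) with hv
  have hvn : ∀ k, ‖v k‖ = taylorTermNorm γ b k t := by
    intro k
    rw [hv, taylorTermNorm]
    simp only [norm_smul, norm_div, norm_pow, Real.norm_eq_abs, Nat.abs_cast]
    ring
  have hmem : κ ∈ Finset.range (N + 1) := Finset.mem_range.2 (Nat.lt_succ_of_le hκ)
  rw [eval_curve_eq_sum γ hγ b t, ← Finset.add_sum_erase _ v hmem, ← hvn κ]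
  set e := ∑ k ∈ (Finset.range (N + 1)).erase κ, v k
  have he : ‖e‖ ≤ 1 / 2 * ‖v κ‖ := by
    have h1 : ‖e‖ ≤ ((Finset.range (N + 1)).erase κ).card • (ε * ‖v κ‖) := by
      refine (norm_sum_le _ _).trans (Finset.sum_le_card_nsmul _ _ _ fun k hk => ?_)
      rw [Finset.mem_erase, Finset.mem_range] at hk
      rw [hvn, hvn]
      exact h k (Nat.le_of_lt_succ hk.2) hk.1
    rw [Finset.card_erase_of_mem hmem, Finset.card_range, Nat.add_sub_cancel, nsmul_eq_mul,
      ← mul_assoc] at h1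
    exact h1.trans (mul_le_mul_of_nonneg_right hε (norm_nonneg _))
  have h1 := norm_add_le (v κ) e
  have h2 := norm_sub_le (v κ + e) e
  rw [add_sub_cancel_right] at h2
  constructor <;> linarith

/-- Near a point that stays away from all roots relative to the size of the neighbourhood, the
constant Taylor term dominates. -/
lemma hasDominantTerm_of_short {n N : ℕ} {γ : Fin n → Polynomial ℝ}
    (hγ : ∀ i, (γ i).natDegree ≤ N) {ε : ℝ} (hε : 0 < ε) (hε1 : ε ≤ 1) {J : Set ℝ} {b σ r u : ℝ}
    (hσ : σ = 1 ∨ σ = -1) (hr : 0 < r) (hru : r ≤ u)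
    (hroot : ∀ t ∈ J, ∀ i, ∀ w ∈ (γ i).aroots ℂ, |t - b| ≤ ‖(t : ℂ) - w‖)
    (hJ : ∀ t ∈ J, σ * (t - b) ∈ Set.Ico u (u + ε / 2 ^ (N + 1) * r)) :
    HasDominantTerm γ N ε J := by
  set δ := ε / 2 ^ (N + 1) with hδ
  rcases J.eq_empty_or_nonempty with rfl | ⟨t₀, ht₀⟩
  · exact hasDominantTerm_empty γ N ε
  have hσ2 : σ * σ = 1 := by rcases hσ with rfl | rfl <;> norm_num
  have hσabs : |σ| = 1 := by rcases hσ with rfl | rfl <;> norm_num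
  have hδ0 : 0 < δ := by positivity
  have hδε : 2 ^ N * (2 * δ) = ε := by rw [hδ, pow_succ]; field_simp
  have hδ2 : 2 * δ ≤ 1 := by
    have : (1 : ℝ) ≤ 2 ^ N := one_le_pow₀ (by norm_num)
    nlinarith
  set b' := b + σ * (u + δ * r) with hb'
  have hdist : ∀ t ∈ J, |t - b'| ≤ δ * r := by
    intro t ht
    have h1 := hJ t ht
    have h2 : t - b' = σ * (σ * (t - b) - (u + δ * r)) := by
      rw [hb', mul_sub, ← mul_assoc, hσ2]; ring
    rw [h2, abs_mul, hσabs, one_mul, abs_le]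
    constructor <;> linarith [h1.1, h1.2]
  refine ⟨b', fun h => ?_, 0, Nat.zero_le N, fun t ht k hk hk0 => ?_⟩
  · have h1 := (hJ b' h).2
    rw [hb', add_sub_cancel_left, ← mul_assoc, hσ2, one_mul] at h1
    exact lt_irrefl _ h1
  have hroots' : ∀ i, ∀ w ∈ (γ i).aroots ℂ, r / 2 ≤ ‖(b' : ℂ) - w‖ := by
    intro i w hw
    have h1 := hroot t₀ ht₀ i w hw
    have h2 : u ≤ |t₀ - b| := by
      calc u ≤ σ * (t₀ - b) := (hJ t₀ ht₀).1
        _ ≤ |σ * (t₀ - b)| := le_abs_self _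
        _ = |t₀ - b| := by rw [abs_mul, hσabs, one_mul]
    have h3 : ‖(t₀ : ℂ) - b'‖ ≤ δ * r := by
      rw [← Complex.ofReal_sub, Complex.norm_real]; exact hdist t₀ ht₀
    have h4 := norm_add_le ((t₀ : ℂ) - b') ((b' : ℂ) - w)
    rw [sub_add_sub_cancel] at h4
    nlinarith
  set V := ‖(fun i => Polynomial.eval b' (γ i) : Fin n → ℝ)‖ with hV
  have hV0 : taylorTermNorm γ b' 0 t = V := by simp [taylorTermNorm, hV]
  have hr2 : 0 < (r / 2) ^ k := by positivity
  have hk' : (0 : ℝ) < k.factorial := by positivity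
  have hD : ‖(fun i => Polynomial.eval b' (Polynomial.derivative^[k] (γ i)) : Fin n → ℝ)‖
      ≤ 2 ^ N * V * k.factorial / (r / 2) ^ k := by
    refine (pi_norm_le_iff_of_nonneg (by positivity)).2 fun i => ?_
    have h1 := abs_eval_iterate_derivative_le (γ i) (hγ i) (by positivity) (hroots' i) k
    have h2 : |Polynomial.eval b' (γ i)| ≤ V :=
      norm_le_pi_norm (fun i => Polynomial.eval b' (γ i) : Fin n → ℝ) i
    rw [Real.norm_eq_abs, le_div_iff₀ hr2]
    rw [div_le_iff₀ hk'] at h1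
    refine h1.trans ?_
    gcongr
  rw [hV0, taylorTermNorm, div_le_iff₀ hk']
  calc _ ≤ (2 ^ N * V * k.factorial / (r / 2) ^ k) * (δ * r) ^ k := by
        gcongr; exact hdist t ht
    _ = 2 ^ N * (2 * δ) ^ k * (V * k.factorial) := by
        rw [show δ * r = 2 * δ * (r / 2) by ring, mul_pow (2 * δ)]; field_simp
    _ ≤ 2 ^ N * (2 * δ) * (V * k.factorial) := by
        gcongr
        exact pow_le_of_le_one (by positivity) hδ2 hk0
    _ = ε * V * k.factorial := by rw [hδε]; ring

lemma ordConnected_preimage_mul_sub {S : Set ℝ} (hS : S.OrdConnected) {b σ : ℝ}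
    (hσ : σ = 1 ∨ σ = -1) : {t : ℝ | σ * (t - b) ∈ S}.OrdConnected := by
  refine ⟨fun x hx y hy t ht => ?_⟩
  rcases hσ with rfl | rfl
  · exact hS.out hx hy ⟨by linarith [ht.1], by linarith [ht.2]⟩
  · exact hS.out hy hx ⟨by linarith [ht.2], by linarith [ht.1]⟩

lemma mul_pow_le_mul_pow_of_between {a c x y z : ℝ} {k l : ℕ} (ha : 0 ≤ a) (hc : 0 ≤ c)
    (hx0 : 0 < x) (hxy : x ≤ y) (hyz : y ≤ z) (hx : a * x ^ l ≤ c * x ^ k)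
    (hz : a * z ^ l ≤ c * z ^ k) : a * y ^ l ≤ c * y ^ k := by
  have hy0 : 0 < y := hx0.trans_le hxy
  have hz0 : 0 < z := hy0.trans_le hyz
  rcases le_total l k with h | h
  · obtain ⟨d, rfl⟩ := Nat.exists_eq_add_of_le h
    have h1 : a ≤ c * x ^ d := by
      refine le_of_mul_le_mul_right (hx.trans_eq ?_) (pow_pos hx0 l); ring
    have h2 : a ≤ c * y ^ d := h1.trans (by gcongr)
    calc a * y ^ l ≤ c * y ^ d * y ^ l := by gcongr
      _ = _ := by ring
  · obtain ⟨d, rfl⟩ := Nat.exists_eq_add_of_le h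
    have h1 : a * z ^ d ≤ c := by
      refine le_of_mul_le_mul_right (Eq.trans_le ?_ hz) (pow_pos hz0 k); ring
    have h2 : a * y ^ d ≤ c := le_trans (by gcongr) h1
    calc a * y ^ (k + d) = a * y ^ d * y ^ k := by ring
      _ ≤ _ := by gcongr

/-- Two distinct monomials are comparable only on a bounded range of scales. -/
lemma mul_le_of_monomials_comparable {a c ε s s₀ : ℝ} {k l : ℕ} (hkl : k ≠ l) (hε : 0 < ε)
    (hε1 : ε ≤ 1) (hs : 0 < s) (hs₀ : 0 < s₀) (ha : 0 < a)
    (h1 : ε * (a * s ^ k) < c * s ^ l) (h2 : c * s ^ l ≤ a * s ^ k)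
    (h1' : ε * (a * s₀ ^ k) < c * s₀ ^ l) (h2' : c * s₀ ^ l ≤ a * s₀ ^ k) : ε * s ≤ s₀ := by
  have key : ∀ d : ℕ, d ≠ 0 → ε * s ^ d < s₀ ^ d → ε * s ≤ s₀ := by
    intro d hd h
    by_contra! hlt
    have h3 : s₀ ^ d ≤ (ε * s) ^ d := by gcongr
    have h4 : ε ^ d ≤ ε := pow_le_of_le_one hε.le hε1 hd
    rw [mul_pow] at h3
    have h5 := mul_le_mul_of_nonneg_right h4 (pow_pos hs d).le
    linarith
  rcases le_total k l with h | h
  · obtain ⟨d, rfl⟩ := Nat.exists_eq_add_of_le h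
    have hc : 0 < c := by
      by_contra! hc
      have : 0 < ε * (a * s ^ k) := by positivity
      nlinarith [pow_pos hs (k + d)]
    have e1 : c * s ^ d ≤ a :=
      le_of_mul_le_mul_right (Eq.trans_le (by ring) h2) (pow_pos hs k)
    have e2 : ε * a < c * s₀ ^ d :=
      lt_of_mul_lt_mul_right (lt_of_eq_of_lt (by ring) (h1'.trans_eq (by ring)))
        (pow_pos hs₀ k).le (b := ε * a) (c := c * s₀ ^ d)
    refine key d (by omega) (lt_of_mul_lt_mul_left ?_ hc.le)
    nlinarith
  · obtain ⟨d, rfl⟩ := Nat.exists_eq_add_of_le h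
    have e1 : ε * (a * s ^ d) < c :=
      lt_of_mul_lt_mul_right (lt_of_eq_of_lt (by ring) h1) (pow_pos hs l).le
    have e2 : c ≤ a * s₀ ^ d :=
      le_of_mul_le_mul_right (h2'.trans_eq (by ring)) (pow_pos hs₀ l)
    refine key d (by omega) (lt_of_mul_lt_mul_left ?_ ha.le)
    nlinarith

/-- A set where the distance to `b` varies by a bounded factor and bounds from below the distance to
the roots is covered by a bounded number of intervals with a dominant term. -/
lemma coveredBy_of_bounded_scales {n N : ℕ} {γ : Fin n → Polynomial ℝ}
    (hγ : ∀ i, (γ i).natDegree ≤ N) {ε : ℝ} (hε : 0 < ε) (hε1 : ε ≤ 1) {C : Set ℝ}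
    (hC : C.OrdConnected) {b σ s₀ : ℝ} (hσ : σ = 1 ∨ σ = -1) (hs₀ : 0 < s₀)
    (hroot : ∀ t ∈ C, ∀ i, ∀ w ∈ (γ i).aroots ℂ, |t - b| ≤ ‖(t : ℂ) - w‖) :
    CoveredBy (HasDominantTerm γ N ε) (⌊1 / (ε / 2 ^ (N + 1) * ε ^ 2)⌋₊ + 1)
      {t ∈ C | ε * s₀ ≤ σ * (t - b) ∧ ε * (σ * (t - b)) ≤ s₀} := by
  set δ := ε / 2 ^ (N + 1) with hδ
  have hδ0 : 0 < δ := by positivity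
  set r := ε * s₀ with hr
  have hr0 : 0 < r := by positivity
  set M := ⌊1 / (δ * ε ^ 2)⌋₊ + 1
  let P : ℕ → Set ℝ := fun m =>
    {t | σ * (t - b) ∈ Set.Ico (r + m * (δ * r)) (r + m * (δ * r) + δ * r)} ∩ C
  have hP : ∀ m ∈ Finset.range M, CoveredBy (HasDominantTerm γ N ε) 1 (P m) := by
    intro m _
    refine .of_self ((ordConnected_preimage_mul_sub Set.ordConnected_Ico hσ).inter hC) ?_
    refine hasDominantTerm_of_short hγ hε hε1 hσ hr0 (u := r + m * (δ * r)) ?_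
      (fun t ht => hroot t ht.2) fun t ht => ht.1
    have : 0 ≤ m * (δ * r) := by positivity
    linarith
  have := CoveredBy.biUnion (Finset.range M) P hP
  rw [Finset.card_range, mul_one] at this
  refine this.subset fun t ⟨htC, h1, h2⟩ => ?_
  set s := σ * (t - b)
  have hd : 0 < δ * r := by positivity
  have hq : 0 ≤ (s - r) / (δ * r) := div_nonneg (by linarith) hd.le
  refine Set.mem_iUnion₂.2 ⟨⌊(s - r) / (δ * r)⌋₊, ?_, ⟨?_, ?_⟩, htC⟩
  · rw [Finset.mem_range]
    refine Nat.lt_succ_of_le (Nat.floor_le_floor ?_)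
    rw [div_le_div_iff₀ hd (by positivity)]
    have : (s - r) * ε ≤ s₀ := by nlinarith
    calc (s - r) * (δ * ε ^ 2) = (s - r) * ε * (δ * ε) := by ring
      _ ≤ s₀ * (δ * ε) := by gcongr
      _ = 1 * (δ * r) := by rw [hr]; ring
  · have := Nat.floor_le hq
    rw [le_div_iff₀ hd] at this
    linarith
  · have := Nat.lt_floor_add_one ((s - r) / (δ * r))
    rw [div_lt_iff₀ hd] at this
    linarith

lemma coveredBy_one_side {n N : ℕ} {γ : Fin n → Polynomial ℝ}
    (hγ : ∀ i, (γ i).natDegree ≤ N) {ε : ℝ} (hε : 0 < ε) (hε1 : ε ≤ 1) {C : Set ℝ}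
    (hC : C.OrdConnected) {b σ : ℝ} (hσ : σ = 1 ∨ σ = -1)
    (hroot : ∀ t ∈ C, ∀ i, ∀ w ∈ (γ i).aroots ℂ, |t - b| ≤ ‖(t : ℂ) - w‖) :
    CoveredBy (HasDominantTerm γ N ε)
      ((N + 1) * 1 + (N + 1) * ((N + 1) * (⌊1 / (ε / 2 ^ (N + 1) * ε ^ 2)⌋₊ + 1)))
      {t ∈ C | 0 < σ * (t - b)} := by
  set M := ⌊1 / (ε / 2 ^ (N + 1) * ε ^ 2)⌋₊ + 1
  have hσabs : |σ| = 1 := by rcases hσ with rfl | rfl <;> norm_num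
  set a : ℕ → ℝ := fun k =>
    ‖(fun i => Polynomial.eval b (Polynomial.derivative^[k] (γ i)) : Fin n → ℝ)‖ /
      (k.factorial : ℝ) with ha
  have ha0 : ∀ k, 0 ≤ a k := fun k => by positivity
  have hT : ∀ k t, 0 < σ * (t - b) → taylorTermNorm γ b k t = a k * (σ * (t - b)) ^ k := by
    intro k t ht
    have : |t - b| = σ * (t - b) := by
      rw [← abs_of_pos ht, abs_mul, hσabs, one_mul]
    rw [taylorTermNorm, this, ha]
    ring
  let D : ℕ → Set ℝ := fun k =>
    {t | σ * (t - b) ∈ {s : ℝ | 0 < s ∧ ∀ l ≤ N, l ≠ k → a l * s ^ l ≤ ε * (a k * s ^ k)}} ∩ C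
  have hD : ∀ k ∈ Finset.range (N + 1), CoveredBy (HasDominantTerm γ N ε) 1 (D k) := by
    intro k hk
    have hconn :
        {s : ℝ | 0 < s ∧ ∀ l ≤ N, l ≠ k → a l * s ^ l ≤ ε * (a k * s ^ k)}.OrdConnected := by
      refine ⟨fun x hx z hz y hy => ⟨hx.1.trans_le hy.1, fun l hl hlk => ?_⟩⟩
      have h1 := hx.2 l hl hlk
      have h2 := hz.2 l hl hlk
      rw [← mul_assoc] at h1 h2 ⊢
      exact mul_pow_le_mul_pow_of_between (ha0 l) (mul_nonneg hε.le (ha0 k)) hx.1 hy.1 hy.2 h1 h2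
    refine .of_self ((ordConnected_preimage_mul_sub hconn hσ).inter hC)
      ⟨b, fun h => ?_, k, Nat.le_of_lt_succ (Finset.mem_range.1 hk), fun t ht l hl hlk => ?_⟩
    · have h1 : 0 < σ * (b - b) := h.1.1
      simp at h1
    · rw [hT l t ht.1.1, hT k t ht.1.1]
      exact ht.1.2 l hl hlk
  let B : ℕ → ℕ → Set ℝ := fun k l => {t ∈ C | k ≠ l ∧ 0 < σ * (t - b) ∧
    ε * (a k * (σ * (t - b)) ^ k) < a l * (σ * (t - b)) ^ l ∧
    a l * (σ * (t - b)) ^ l ≤ a k * (σ * (t - b)) ^ k}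
  have hB : ∀ k l, CoveredBy (HasDominantTerm γ N ε) M (B k l) := by
    intro k l
    rcases (B k l).eq_empty_or_nonempty with he | ⟨t₀, -, hkl, hs₀, h1', h2'⟩
    · exact ⟨∅, by simp, by simp, by simp [he]⟩
    · refine (coveredBy_of_bounded_scales hγ hε hε1 hC hσ hs₀ hroot).subset ?_
      rintro t ⟨htC, -, hs, h1, h2⟩
      have hak : 0 < a k := by
        refine (ha0 k).lt_of_ne fun h => ?_
        rw [← h] at h1 h2
        linarith
      exact ⟨htC, mul_le_of_monomials_comparable hkl hε hε1 hs₀ hs hak h1' h2' h1 h2,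
        mul_le_of_monomials_comparable hkl hε hε1 hs hs₀ hak h1 h2 h1' h2'⟩
  have hcov := (CoveredBy.biUnion (Finset.range (N + 1)) D hD).union
    (CoveredBy.biUnion (Finset.range (N + 1)) _ fun k _ =>
      CoveredBy.biUnion (Finset.range (N + 1)) (B k) fun l _ => hB k l)
  rw [Finset.card_range] at hcov
  refine hcov.subset ?_
  rintro t ⟨htC, hs⟩
  obtain ⟨k, hk, hmax⟩ := (Finset.range (N + 1)).exists_max_image
    (fun k => a k * (σ * (t - b)) ^ k) ⟨0, by simp⟩
  by_cases hdom : ∀ l ≤ N, l ≠ k → a l * (σ * (t - b)) ^ l ≤ ε * (a k * (σ * (t - b)) ^ k)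
  · exact Or.inl (Set.mem_iUnion₂.2 ⟨k, hk, ⟨hs, hdom⟩, htC⟩)
  · push Not at hdom
    obtain ⟨l, hl, hlk, hlt⟩ := hdom
    have hlmem : l ∈ Finset.range (N + 1) := Finset.mem_range.2 (Nat.lt_succ_of_le hl)
    exact Or.inr (Set.mem_iUnion₂.2 ⟨k, hk, Set.mem_iUnion₂.2
      ⟨l, hlmem, htC, hlk.symm, hs, hlt, hmax l hlmem⟩⟩)

/-- Voronoi cells of complex points meet the real line in intervals. -/
lemma ordConnected_voronoi (Z : Finset ℂ) (z : ℂ) :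
    {t : ℝ | ∀ w ∈ Z, ‖(t : ℂ) - z‖ ≤ ‖(t : ℂ) - w‖}.OrdConnected := by
  have key : ∀ (t : ℝ) (w : ℂ), ‖(t : ℂ) - z‖ ≤ ‖(t : ℂ) - w‖ ↔
      2 * (w.re - z.re) * t ≤ w.re ^ 2 + w.im ^ 2 - z.re ^ 2 - z.im ^ 2 := by
    intro t w
    rw [← sq_le_sq₀ (norm_nonneg _) (norm_nonneg _), Complex.sq_norm, Complex.sq_norm,
      Complex.normSq_apply, Complex.normSq_apply]
    simp only [Complex.sub_re, Complex.sub_im, Complex.ofReal_re, Complex.ofReal_im]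
    constructor <;> intro h <;> nlinarith
  refine ⟨fun x hx y hy t ht w hw => ?_⟩
  have h1 := (key x w).1 (hx w hw)
  have h2 := (key y w).1 (hy w hw)
  rw [key]
  rcases le_total 0 (w.re - z.re) with h | h
  · nlinarith [mul_le_mul_of_nonneg_left ht.2 h]
  · nlinarith [mul_le_mul_of_nonpos_left ht.1 h]

/-- Off a bounded number of exceptional points, the line is covered by a bounded number of
intervals on which `γ` has a dominant Taylor term. -/
lemma exists_coveredBy_compl_finset {n N : ℕ} {γ : Fin n → Polynomial ℝ}
    (hγ : ∀ i, (γ i).natDegree ≤ N) {ε : ℝ} (hε : 0 < ε) (hε1 : ε ≤ 1) :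
    ∃ E : Finset ℝ, E.card ≤ n * N + 1 ∧ CoveredBy (HasDominantTerm γ N ε)
      ((n * N + 1) * (2 * ((N + 1) * 1 +
        (N + 1) * ((N + 1) * (⌊1 / (ε / 2 ^ (N + 1) * ε ^ 2)⌋₊ + 1))))) ((E : Set ℝ)ᶜ) := by
  classical
  set K := (N + 1) * 1 + (N + 1) * ((N + 1) * (⌊1 / (ε / 2 ^ (N + 1) * ε ^ 2)⌋₊ + 1))
  set Z : Finset ℂ := insert 0 (Finset.univ.biUnion fun i => ((γ i).aroots ℂ).toFinset) with hZ
  have hZmem : ∀ i, ∀ w ∈ (γ i).aroots ℂ, w ∈ Z := by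
    intro i w hw
    exact Finset.mem_insert_of_mem
      (Finset.mem_biUnion.2 ⟨i, Finset.mem_univ i, Multiset.mem_toFinset.2 hw⟩)
  have hZcard : Z.card ≤ n * N + 1 := by
    refine (Finset.card_insert_le _ _).trans (Nat.succ_le_succ ?_)
    refine (Finset.card_biUnion_le_card_mul _ _ N fun i _ => ?_).trans_eq (by simp)
    exact (Multiset.toFinset_card_le _).trans
      ((Polynomial.card_roots' _).trans (Polynomial.natDegree_map_le.trans (hγ i)))
  let C : ℂ → Set ℝ := fun z => {t | ∀ w ∈ Z, ‖(t : ℂ) - z‖ ≤ ‖(t : ℂ) - w‖}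
  have hroot : ∀ z, ∀ t ∈ C z, ∀ i, ∀ w ∈ (γ i).aroots ℂ, |t - z.re| ≤ ‖(t : ℂ) - w‖ := by
    intro z t ht i w hw
    have h1 := Complex.abs_re_le_norm ((t : ℂ) - z)
    rw [Complex.sub_re, Complex.ofReal_re] at h1
    exact h1.trans (ht w (hZmem i w hw))
  refine ⟨Z.image Complex.re, Finset.card_image_le.trans hZcard, ?_⟩
  have hcov := CoveredBy.biUnion (G := HasDominantTerm γ N ε) Z _ fun z _ =>
    (coveredBy_one_side hγ hε hε1 (ordConnected_voronoi Z z) (Or.inl rfl) (hroot z)).union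
      (coveredBy_one_side hγ hε hε1 (ordConnected_voronoi Z z) (Or.inr rfl) (hroot z))
  obtain ⟨𝒥, h1, h2, h3⟩ := hcov
  refine ⟨𝒥, h1.trans ?_, h2, fun t ht => h3 t ?_⟩
  · rw [← two_mul]
    exact Nat.mul_le_mul_right _ hZcard
  · obtain ⟨z, hz, hmin⟩ := Z.exists_min_image (fun z => ‖(t : ℂ) - z‖) ⟨0, by simp [hZ]⟩
    have hne : t ≠ z.re := fun h => ht (Finset.mem_coe.2 (Finset.mem_image.2 ⟨z, hz, h.symm⟩))
    refine Set.mem_iUnion₂.2 ⟨z, hz, ?_⟩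
    rcases hne.lt_or_gt with h | h
    · exact Or.inr ⟨hmin, by linarith⟩
    · exact Or.inl ⟨hmin, by linarith⟩

/-- A cover by intervals off a finite set refines to a partition into open intervals. -/
lemma CoveredBy.exists_partition {G : Set ℝ → Prop} (hempty : G ∅)
    (hmono : ∀ I J : Set ℝ, I ⊆ J → G J → G I) {K : ℕ} {E : Finset ℝ}
    (h : CoveredBy G K ((E : Set ℝ)ᶜ)) :
    ∃ m ≤ E.card + 2 * K + 1, ∃ I : Fin m → Set ℝ,
      (∀ j, IsOpen (I j)) ∧ (∀ j, (I j).OrdConnected) ∧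
      (Pairwise fun j j' => Disjoint (I j) (I j')) ∧
      (⋃ j, closure (I j)) = Set.univ ∧ ∀ j, G (I j) := by
  classical
  obtain ⟨𝒥, hcard, hG, hcov⟩ := h
  set F : Finset ℝ := E ∪ (𝒥.image sSup ∪ 𝒥.image sInf) with hF
  have hFcard : F.card ≤ E.card + 2 * K := by
    have h1 := Finset.card_union_le E (𝒥.image sSup ∪ 𝒥.image sInf)
    have h2 := Finset.card_union_le (𝒥.image sSup) (𝒥.image sInf)
    have h3 : (𝒥.image sSup).card ≤ 𝒥.card := Finset.card_image_le
    have h4 : (𝒥.image sInf).card ≤ 𝒥.card := Finset.card_image_le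
    rw [hF]
    omega
  obtain ⟨I, hopen, hconn, hdisj, hun, havoid⟩ := exists_open_intervals_compl F
  refine ⟨F.card + 1, by omega, I, hopen, hconn, hdisj, hun, fun j => ?_⟩
  rcases (I j).eq_empty_or_nonempty with he | ⟨t, ht⟩
  · exact he ▸ hempty
  · obtain ⟨J, hJ, htJ⟩ := hcov t fun hE =>
      havoid j t (Finset.mem_union_left _ (Finset.mem_coe.1 hE)) ht
    refine hmono _ J ((hconn j).subset_of_sSup_sInf_notMem (hG J hJ).1 ht htJ ?_ ?_) (hG J hJ).2
    · exact havoid j _ (Finset.mem_union_right _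
        (Finset.mem_union_left _ (Finset.mem_image_of_mem _ hJ)))
    · exact havoid j _ (Finset.mem_union_right _
        (Finset.mem_union_right _ (Finset.mem_image_of_mem _ hJ)))

/-- Monomial approximation of a polynomial curve: `ℝ` decomposes into boundedly many nonoverlapping
open intervals on each of which a single Taylor term of `γ` about a center `b_j ∉ I_j` dominates
all others by the factor `ε`; in particular `|γ(t)|` is comparable to that term on `I_j`. -/
theorem stmt11 (n N : ℕ) (hN : 0 < N) (ε : ℝ) (hε : 0 < ε) (hε' : ε < 1 / (2 * N)) :
    ∃ N' : ℕ, ∀ γ : Fin n → Polynomial ℝ, (∀ i, (γ i).natDegree ≤ N) →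
      ∃ (m : ℕ) (I : Fin m → Set ℝ) (b : Fin m → ℝ) (κ : Fin m → ℕ),
        m ≤ N' ∧
        (∀ j, IsOpen (I j)) ∧
        (∀ j, (I j).OrdConnected) ∧
        (Pairwise fun j j' => Disjoint (I j) (I j')) ∧
        (⋃ j, closure (I j)) = Set.univ ∧
        (∀ j, b j ∉ I j) ∧
        (∀ j, κ j ≤ N) ∧
        (∀ j, ∀ t ∈ I j, ∀ k ≤ N, k ≠ κ j →
          ‖(fun i => Polynomial.eval (b j) (Polynomial.derivative^[k] (γ i)) : Fin n → ℝ)‖ *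
              |t - b j| ^ k / (k.factorial : ℝ) ≤
            ε * (‖(fun i => Polynomial.eval (b j) (Polynomial.derivative^[κ j] (γ i)) :
                  Fin n → ℝ)‖ * |t - b j| ^ (κ j) / ((κ j).factorial : ℝ))) ∧
        (∀ j, ∀ t ∈ I j,
          (1 / 2) * (‖(fun i => Polynomial.eval (b j) (Polynomial.derivative^[κ j] (γ i)) :
                Fin n → ℝ)‖ * |t - b j| ^ (κ j) / ((κ j).factorial : ℝ)) ≤
              ‖(fun i => Polynomial.eval t (γ i) : Fin n → ℝ)‖ ∧
            ‖(fun i => Polynomial.eval t (γ i) : Fin n → ℝ)‖ ≤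
              (3 / 2) * (‖(fun i => Polynomial.eval (b j)
                  (Polynomial.derivative^[κ j] (γ i)) : Fin n → ℝ)‖ *
                |t - b j| ^ (κ j) / ((κ j).factorial : ℝ))) := by
  have hN' : (1 : ℝ) ≤ N := by exact_mod_cast hN
  have hNε : N * ε ≤ 1 / 2 := by
    rw [lt_div_iff₀ (by positivity)] at hε'
    linarith
  have hε1 : ε ≤ 1 := by nlinarith
  refine ⟨(n * N + 1) + 2 * ((n * N + 1) * (2 * ((N + 1) * 1 +
    (N + 1) * ((N + 1) * (⌊1 / (ε / 2 ^ (N + 1) * ε ^ 2)⌋₊ + 1))))) + 1, fun γ hγ => ?_⟩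
  obtain ⟨E, hE, hcov⟩ := exists_coveredBy_compl_finset hγ hε hε1
  obtain ⟨m, hm, I, hopen, hconn, hdisj, hun, hG⟩ :=
    hcov.exists_partition (hasDominantTerm_empty γ N ε) fun I J hIJ hJ => hJ.mono hIJ
  choose b hb κ hκ hdom using hG
  exact ⟨m, I, b, κ, hm.trans (by gcongr), hopen, hconn, hdisj, hun, hb, hκ, hdom,
    fun j t ht => norm_eval_curve_comparable hγ hNε (hκ j) (hdom j t ht)⟩
end

section
/- Let P : ℝ^n → ℝ^n and γ : ℝ → ℝ^n be polynomials of degree at most N, let T = {(x', x_n) ∈ ℝ^n : |x'| < 1} be the unit cylinder, and assume det DP is nonvanishing on the closure of T. Then the preimage γ^{-1}(P(T)) ⊆ ℝ is a union of at most C(n,N) intervals. -/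
open Polynomial

/-- Pseudo-division: along the zeros of `q`, if the `i`-th coefficient is the effective leading one,
the sign of `p` is that of a polynomial of degree `< i`. -/
theorem exists_natDegree_lt_sign_eval₂_eq {A : Type*} [CommRing A] (q : A[X]) {i : ℕ} (hi : 0 < i)
    (p : A[X]) : ∃ r : A[X], r.natDegree < i ∧ ∀ (x : A →+* ℝ) (t : ℝ), x (q.coeff i) ≠ 0 →
      (∀ j, i < j → x (q.coeff j) = 0) → q.eval₂ x t = 0 →
        SignType.sign (p.eval₂ x t) = SignType.sign (r.eval₂ x t) := by
  obtain ⟨n, hn⟩ : ∃ n, p.natDegree < i + n := ⟨p.natDegree + 1, by omega⟩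
  induction n generalizing p with
  | zero => exact ⟨p, hn, fun _ _ _ _ _ => rfl⟩
  | succ n ih =>
    set a := q.coeff i
    let T : A[X] := ∑ j ∈ Finset.range (i + 1), C (q.coeff j) * X ^ j
    have hT : ∀ j, T.coeff j = if j ≤ i then q.coeff j else 0 := by
      intro j
      simp [T, coeff_X_pow]
    let p₁ : A[X] := C (a ^ 2) * p - C (a * p.coeff (i + n)) * (T * X ^ n)
    have hp₁ : p₁.natDegree < i + n := by
      refine lt_of_le_of_lt ((natDegree_le_iff_coeff_eq_zero (n := i + n - 1)).2 fun j hj => ?_)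
        (by omega : i + n - 1 < i + n)
      have hj' : n ≤ j := by omega
      obtain ⟨k, rfl⟩ := Nat.exists_eq_add_of_le' hj'
      simp only [p₁, coeff_sub, coeff_C_mul, coeff_mul_X_pow, hT]
      rcases eq_or_ne k i with rfl | hk
      · simp [a]; ring
      · have h1 : ¬ k ≤ i := by omega
        rw [coeff_eq_zero_of_natDegree_lt (p := p) (by omega)]
        simp [h1]
    obtain ⟨r, hr, h⟩ := ih p₁ hp₁
    refine ⟨r, hr, fun x t hx hx' hq => ?_⟩
    rw [← h x t hx hx' hq]
    have hTq : T.eval₂ x t = 0 := by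
      rw [← hq, eval₂_eq_eval_map, eval₂_eq_eval_map]
      congr 1
      ext j
      rw [coeff_map, coeff_map, hT]
      split_ifs with hj
      · rfl
      · rw [hx' j (by omega), map_zero]
    have : p₁.eval₂ x t = x a ^ 2 * p.eval₂ x t := by
      rw [eval₂_sub, eval₂_mul, eval₂_mul, eval₂_mul, hTq, eval₂_C, map_pow]; ring
    rw [this, sign_mul, sign_pos (sq_pos_of_ne_zero hx), one_mul]

theorem sign_eq_of_forall_ne_zero {f : ℝ → ℝ} (hf : Continuous f) {s t : ℝ}
    (h : ∀ u ∈ Set.uIcc s t, f u ≠ 0) : SignType.sign (f s) = SignType.sign (f t) := by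
  by_contra hne
  have h0 : (0 : ℝ) ∈ Set.uIcc (f s) (f t) := by
    have hs := h s Set.left_mem_uIcc
    have ht := h t Set.right_mem_uIcc
    rw [Set.mem_uIcc]
    rcases lt_or_gt_of_ne hs with hs | hs <;> rcases lt_or_gt_of_ne ht with ht | ht <;>
      simp_all [sign_neg, sign_pos, le_of_lt]
  obtain ⟨u, hu, hu0⟩ := intermediate_value_uIcc hf.continuousOn h0
  exact h u hu hu0

theorem sign_eval_sub_eval {p : ℝ[X]} {s t : ℝ}
    (h : ∀ u ∈ Set.uIcc s t, p.derivative.eval u ≠ 0) :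
    SignType.sign (p.eval t - p.eval s) =
      SignType.sign (p.derivative.eval t) * SignType.sign (t - s) := by
  have key : ∃ c ∈ Set.uIcc s t, p.eval t - p.eval s = p.derivative.eval c * (t - s) := by
    rcases lt_trichotomy s t with hst | rfl | hst
    · obtain ⟨c, hc, e⟩ := exists_deriv_eq_slope (fun u => p.eval u) hst p.continuousOn
        p.differentiable.differentiableOn
      refine ⟨c, Set.Icc_subset_uIcc (Set.Ioo_subset_Icc_self hc), ?_⟩
      rw [Polynomial.deriv] at e
      rw [e, div_mul_cancel₀ _ (by linarith)]
    · exact ⟨s, Set.left_mem_uIcc, by simp⟩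
    · obtain ⟨c, hc, e⟩ := exists_deriv_eq_slope (fun u => p.eval u) hst p.continuousOn
        p.differentiable.differentiableOn
      refine ⟨c, Set.Icc_subset_uIcc' (Set.Ioo_subset_Icc_self hc), ?_⟩
      rw [Polynomial.deriv, eq_div_iff (by linarith)] at e
      linarith
  obtain ⟨c, hc, e⟩ := key
  rw [e, sign_mul, sign_eq_of_forall_ne_zero p.derivative.continuous
    fun u hu => h u (Set.uIcc_subset_uIcc hc Set.right_mem_uIcc hu)]

theorem exists_orderIso_of_le {u v c b : ℝ} (huc : u < c) (hcb : c ≤ b) (hbv : b < v) :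
    ∃ ψ : ℝ ≃o ℝ, ψ c = b ∧ ∀ t, t ∉ Set.Ioo u v → ψ t = t := by
  have hcu : 0 < c - u := by linarith
  have hvc : 0 < v - c := by linarith
  have hk : 1 ≤ (b - u) / (c - u) := by rw [le_div_iff₀ hcu]; linarith
  have hl : (v - b) / (v - c) ≤ 1 := by rw [div_le_iff₀ hvc]; linarith
  have hl0 : 0 < (v - b) / (v - c) := by apply div_pos <;> linarith
  set k := (b - u) / (c - u) with hkdef
  set l := (v - b) / (v - c) with hldef
  have hkc : u + k * (c - u) = b := by rw [hkdef, div_mul_cancel₀ _ hcu.ne']; ring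
  have hlc : v - l * (v - c) = b := by rw [hldef, div_mul_cancel₀ _ hvc.ne']; ring
  let f : ℝ → ℝ := fun t => max t (min (u + k * (t - u)) (v - l * (v - t)))
  have hfix : ∀ t, t ∉ Set.Ioo u v → f t = t := by
    intro t ht
    refine max_eq_left ?_
    rw [Set.mem_Ioo, not_and_or, not_lt, not_lt] at ht
    rcases ht with ht | ht
    · exact min_le_of_left_le (by nlinarith)
    · exact min_le_of_right_le (by nlinarith)
  have hmono : StrictMono f := by
    have h1 : StrictMono fun t : ℝ => u + k * (t - u) := fun s t hst => by
      have : 0 < k := by linarith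
      simp only; nlinarith
    have h2 : StrictMono fun t : ℝ => v - l * (v - t) := fun s t hst => by
      simp only; nlinarith
    exact fun s t hst => max_lt_max hst (min_lt_min (h1 hst) (h2 hst))
  have hcont : Continuous f := by fun_prop
  have hsurj : Function.Surjective f := by
    intro s
    have h1 : f (min s u) = min s u := hfix _ fun h => absurd h.1 (not_lt.2 (min_le_right _ _))
    have h2 : f (max s v) = max s v := hfix _ fun h => absurd h.2 (not_lt.2 (le_max_right _ _))
    have hs : s ∈ Set.Icc (f (min s u)) (f (max s v)) := by
      rw [h1, h2]; exact ⟨min_le_left _ _, le_max_left _ _⟩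
    obtain ⟨t, -, ht⟩ := intermediate_value_Icc ((min_le_left _ _).trans (le_max_left _ _))
      hcont.continuousOn hs
    exact ⟨t, ht⟩
  refine ⟨hmono.orderIsoOfSurjective f hsurj, ?_, hfix⟩
  change max c (min (u + k * (c - u)) (v - l * (v - c))) = b
  rw [hkc, hlc, min_self, max_eq_right hcb]

theorem exists_orderIso_eq_id_off_Ioo {u v c b : ℝ} (hc : c ∈ Set.Ioo u v)
    (hb : b ∈ Set.Ioo u v) : ∃ ψ : ℝ ≃o ℝ, ψ c = b ∧ ∀ t, t ∉ Set.Ioo u v → ψ t = t := by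
  rcases le_total c b with h | h
  · exact exists_orderIso_of_le hc.1 h hb.2
  · obtain ⟨ψ, h1, h2⟩ := exists_orderIso_of_le hb.1 h hc.2
    exact ⟨ψ.symm, by rw [← h1, ψ.symm_apply_apply],
      fun t ht => by rw [ψ.symm_apply_eq, h2 t ht]⟩

theorem exists_eval_eq_zero_of_nonpos_of_pos {p₁ p₂ : ℝ[X]} {φ : ℝ ≃o ℝ} {W : Set ℝ}
    (hWf : W.Finite) (hW : ∀ w ∈ W, SignType.sign (p₁.eval w) = SignType.sign (p₂.eval (φ w)))
    (hd : ∀ t, SignType.sign (p₁.derivative.eval t) = SignType.sign (p₂.derivative.eval (φ t)))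
    (hd0 : ∀ t, t ∉ W → p₁.derivative.eval t ≠ 0) {t : ℝ} (ht : t ∉ W)
    (hpos : 0 < p₁.derivative.eval t) (h1 : p₁.eval t ≤ 0) (h2 : 0 < p₂.eval (φ t)) :
    ∃ s, (∀ w ∈ W, w ∉ Set.uIcc s t) ∧ p₂.eval (φ s) = 0 := by
  have hder : ∀ s ≤ t, (∀ w ∈ W, w ∉ Set.uIcc s t) → 0 < p₁.derivative.eval s := by
    intro s _ hs
    rw [← sign_eq_one_iff, sign_eq_of_forall_ne_zero p₁.derivative.continuous
      (t := t) fun u hu => hd0 u fun hw => hs u hw hu, sign_eq_one_iff]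
    exact hpos
  rcases (W ∩ Set.Iio t).eq_empty_or_nonempty with hemp | hne
  · have hfree : ∀ s ≤ t, ∀ w ∈ W, w ∉ Set.uIcc s t := by
      intro s hs w hw hws
      rw [Set.uIcc_of_le hs] at hws
      rcases hws.2.eq_or_lt with rfl | hlt
      · exact ht hw
      · exact Set.notMem_empty w (hemp ▸ ⟨hw, hlt⟩)
    have hpos₂ : ∀ c ≤ φ t, 0 < p₂.derivative.eval c := by
      intro c hc
      have hc' : φ.symm c ≤ t := by rwa [φ.symm_apply_le]
      have := hder _ hc' (hfree _ hc')
      rwa [← sign_eq_one_iff, hd, φ.apply_symm_apply, sign_eq_one_iff] at this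
    have hdeg : 0 < (p₂.comp (-X)).degree := by
      rw [← natDegree_pos_iff_degree_pos, natDegree_comp, natDegree_neg, natDegree_X, mul_one]
      refine Nat.pos_of_ne_zero fun h => ?_
      have := hpos₂ (φ t) le_rfl
      rw [derivative_of_natDegree_zero h] at this
      simp at this
    have hlim := (Polynomial.abs_tendsto_atTop _ hdeg).eventually_gt_atTop (p₂.eval (φ t))
    obtain ⟨z, hz, hzt⟩ := (hlim.and (Filter.eventually_gt_atTop (-φ t))).exists
    have hzt' : -z < φ t := by linarith
    have hmono := sign_eval_sub_eval (p := p₂) (s := -z) (t := φ t) fun u hu => by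
      rw [Set.uIcc_of_le hzt'.le] at hu
      exact (hpos₂ u hu.2).ne'
    rw [sign_pos (hpos₂ _ le_rfl), sign_pos (show 0 < φ t - -z by linarith), one_mul,
      sign_eq_one_iff] at hmono
    simp only [eval_comp, eval_neg, eval_X] at hz
    have hneg : p₂.eval (-z) < 0 := by
      by_contra hcon
      rw [abs_of_nonneg (not_lt.1 hcon)] at hz
      linarith
    obtain ⟨c, hc, hc0⟩ := intermediate_value_Icc hzt'.le p₂.continuousOn
      (show (0 : ℝ) ∈ Set.Icc _ _ from ⟨hneg.le, h2.le⟩)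
    exact ⟨φ.symm c, hfree _ (by rw [φ.symm_apply_le]; exact hc.2), by simpa using hc0⟩
  · obtain ⟨w, ⟨hw, hwt⟩, hmax⟩ := (hWf.inter_of_left (Set.Iio t)).exists_maximal hne
    rw [Set.mem_Iio] at hwt
    have hfree : ∀ s, w < s → s ≤ t → ∀ w ∈ W, w ∉ Set.uIcc s t := by
      intro s hs hst w' hw' hws
      rw [Set.uIcc_of_le hst] at hws
      rcases hws.2.eq_or_lt with rfl | hlt
      · exact ht hw'
      · exact absurd (hmax ⟨hw', hlt⟩ (hs.le.trans hws.1)) (not_le.2 (hs.trans_le hws.1))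
    have hmono : StrictMonoOn (fun u => p₁.eval u) (Set.Icc w t) := by
      refine strictMonoOn_of_deriv_pos (convex_Icc w t) p₁.continuousOn fun u hu => ?_
      rw [interior_Icc] at hu
      rw [Polynomial.deriv]
      exact hder u hu.2.le (hfree u hu.1 hu.2.le)
    have hw1 : p₁.eval w < 0 :=
      (hmono (Set.left_mem_Icc.2 hwt.le) (Set.right_mem_Icc.2 hwt.le) hwt).trans_le h1
    have hw2 : p₂.eval (φ w) < 0 := by
      rwa [← sign_eq_neg_one_iff, ← hW w hw, sign_eq_neg_one_iff]
    obtain ⟨c, hc, hc0⟩ := intermediate_value_Icc (φ.monotone hwt.le) p₂.continuousOn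
      (show (0 : ℝ) ∈ Set.Icc _ _ from ⟨hw2.le, h2.le⟩)
    have hwc : φ w < c := hc.1.lt_of_ne (by rintro rfl; exact hw2.ne hc0)
    exact ⟨φ.symm c, hfree _ (by rwa [φ.lt_symm_apply]) (by rw [φ.symm_apply_le]; exact hc.2),
      by simpa using hc0⟩

theorem exists_eval_eq_zero_of_derivative_pos {p₁ p₂ : ℝ[X]} {φ : ℝ ≃o ℝ} {W : Set ℝ}
    (hWf : W.Finite) (hW : ∀ w ∈ W, SignType.sign (p₁.eval w) = SignType.sign (p₂.eval (φ w)))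
    (hd : ∀ t, SignType.sign (p₁.derivative.eval t) = SignType.sign (p₂.derivative.eval (φ t)))
    (hd0 : ∀ t, t ∉ W → p₁.derivative.eval t ≠ 0) {t : ℝ} (ht : t ∉ W)
    (hpos : 0 < p₁.derivative.eval t)
    (hne : SignType.sign (p₁.eval t) ≠ SignType.sign (p₂.eval (φ t)))
    (h0 : p₂.eval (φ t) ≠ 0) :
    ∃ s, (∀ w ∈ W, w ∉ Set.uIcc s t) ∧ p₂.eval (φ s) = 0 := by
  rcases lt_or_gt_of_ne h0 with h2 | h2
  · have h1 : 0 ≤ p₁.eval t := by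
      by_contra h; rw [sign_neg h2, sign_neg (not_le.1 h)] at hne; exact hne rfl
    let φ' : ℝ ≃o ℝ := (OrderIso.neg ℝ).trans (φ.dual.trans (OrderIso.neg ℝ).symm)
    have hφ' : ∀ s, φ' s = -φ (-s) := fun s => rfl
    obtain ⟨s, hs, hs0⟩ := exists_eval_eq_zero_of_nonpos_of_pos
      (p₁ := -p₁.comp (-X)) (p₂ := -p₂.comp (-X)) (φ := φ') (W := Neg.neg ⁻¹' W) (t := -t)
      (hWf.preimage neg_injective.injOn)
      (fun w hw => by simpa [hφ', Left.sign_neg] using hW _ hw)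
      (fun u => by simpa [hφ', derivative_comp] using hd (-u))
      (fun u hu => by simpa [derivative_comp] using hd0 (-u) hu)
      (by simpa using ht) (by simpa [derivative_comp] using hpos) (by simpa using h1)
      (by simpa [hφ'] using h2)
    refine ⟨-s, fun w hw hws => hs (-w) (by simpa using hw) ?_, by simpa [hφ'] using hs0⟩
    rw [Set.mem_uIcc] at hws ⊢
    rcases hws with h | h
    · exact Or.inr ⟨by linarith, by linarith⟩
    · exact Or.inl ⟨by linarith, by linarith⟩
  · refine exists_eval_eq_zero_of_nonpos_of_pos hWf hW hd hd0 ht hpos ?_ h2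
    by_contra h; rw [sign_pos h2, sign_pos (not_le.1 h)] at hne; exact hne rfl

/-- Between two consecutive exceptional points, a mismatch of signs forces a zero. -/
theorem exists_eval_eq_zero_of_sign_ne {p₁ p₂ : ℝ[X]} {φ : ℝ ≃o ℝ} {W : Set ℝ}
    (hWf : W.Finite) (hW : ∀ w ∈ W, SignType.sign (p₁.eval w) = SignType.sign (p₂.eval (φ w)))
    (hd : ∀ t, SignType.sign (p₁.derivative.eval t) = SignType.sign (p₂.derivative.eval (φ t)))
    (hd0 : ∀ t, t ∉ W → p₁.derivative.eval t ≠ 0) {t : ℝ} (ht : t ∉ W)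
    (hne : SignType.sign (p₁.eval t) ≠ SignType.sign (p₂.eval (φ t)))
    (h0 : p₂.eval (φ t) ≠ 0) :
    ∃ s, (∀ w ∈ W, w ∉ Set.uIcc s t) ∧ p₂.eval (φ s) = 0 := by
  rcases lt_or_gt_of_ne (hd0 t ht) with h | h
  · obtain ⟨s, hs, hs0⟩ := exists_eval_eq_zero_of_derivative_pos
      (p₁ := -p₁) (p₂ := -p₂) (φ := φ) (W := W) (t := t) hWf
      (fun w hw => by simpa [Left.sign_neg] using hW w hw)
      (fun u => by simpa [Left.sign_neg] using hd u)
      (fun u hu => by simpa using hd0 u hu) ht (by simpa using h)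
      (by simpa [Left.sign_neg] using hne) (by simpa using h0)
    exact ⟨s, hs, by simpa using hs0⟩
  · exact exists_eval_eq_zero_of_derivative_pos hWf hW hd hd0 ht h hne h0

/-- Modify a sign-preserving order isomorphism so that it also preserves the sign of a polynomial
whose derivative belongs to the family. -/
theorem exists_orderIso_sign_eval_eq {ι : Type*} (Q : Finset ι) (f g : ι → ℝ[X]) (p₁ p₂ : ℝ[X])
    {i₀ : ι} (hi₀ : i₀ ∈ Q) (hf₀ : f i₀ = p₁.derivative) (hg₀ : g i₀ = p₂.derivative)
    (hp₁ : p₁.derivative ≠ 0) (φ : ℝ ≃o ℝ)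
    (hφ : ∀ i ∈ Q, ∀ t, SignType.sign ((f i).eval t) = SignType.sign ((g i).eval (φ t)))
    (hW : ∀ i ∈ Q, f i ≠ 0 → ∀ t, (f i).eval t = 0 →
      SignType.sign (p₁.eval t) = SignType.sign (p₂.eval (φ t))) :
    ∃ ψ : ℝ ≃o ℝ,
      (∀ i ∈ Q, ∀ t, SignType.sign ((f i).eval t) = SignType.sign ((g i).eval (ψ t))) ∧
      ∀ t, SignType.sign (p₁.eval t) = SignType.sign (p₂.eval (ψ t)) := by
  have hp₁0 : p₁ ≠ 0 := by rintro rfl; simp at hp₁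
  have hbadfin : ∀ φ : ℝ ≃o ℝ, {a | p₁.eval a = 0 ∧ p₂.eval (φ a) ≠ 0}.Finite := fun φ =>
    (p₁.finite_setOfPred_isRoot hp₁0).subset fun a ha => ha.1
  obtain ⟨n, hn⟩ : ∃ n, {a | p₁.eval a = 0 ∧ p₂.eval (φ a) ≠ 0}.ncard < n := ⟨_, Nat.lt_succ_self _⟩
  induction n generalizing φ with
  | zero => exact absurd hn (Nat.not_lt_zero _)
  | succ n ih =>
    set W : Set ℝ := {t | ∃ i ∈ Q, f i ≠ 0 ∧ (f i).eval t = 0} with hWdef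
    have hWf : W.Finite := by
      have : W = ⋃ i ∈ {i | i ∈ Q ∧ f i ≠ 0}, {t | (f i).IsRoot t} := by
        ext t; simp [hWdef, and_assoc]
      rw [this]
      exact Set.Finite.biUnion (Q.finite_toSet.subset fun i hi => hi.1)
        fun i hi => (f i).finite_setOfPred_isRoot hi.2
    have hW' : ∀ w ∈ W, SignType.sign (p₁.eval w) = SignType.sign (p₂.eval (φ w)) :=
      fun w ⟨i, hi, hi0, hiw⟩ => hW i hi hi0 w hiw
    have hd : ∀ t, SignType.sign (p₁.derivative.eval t) =
        SignType.sign (p₂.derivative.eval (φ t)) := fun t => by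
      rw [← hf₀, ← hg₀]; exact hφ i₀ hi₀ t
    have hd0 : ∀ t, t ∉ W → p₁.derivative.eval t ≠ 0 := fun t ht h0 =>
      ht ⟨i₀, hi₀, hf₀ ▸ hp₁, by rw [hf₀]; exact h0⟩
    by_cases hbad : ∃ a, p₁.eval a = 0 ∧ p₂.eval (φ a) ≠ 0
    · obtain ⟨a, ha1, ha2⟩ := hbad
      have hne : SignType.sign (p₁.eval a) ≠ SignType.sign (p₂.eval (φ a)) := by
        rw [ha1, sign_zero]; exact fun h => ha2 (sign_eq_zero_iff.1 h.symm)
      have haW : a ∉ W := fun h => hne (hW' a h)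
      obtain ⟨s, hs, hs0⟩ := exists_eval_eq_zero_of_sign_ne hWf hW' hd hd0 haW hne ha2
      obtain ⟨u, v, huv, hua, hus⟩ : ∃ u v, (∀ w ∈ W, φ w ∉ Set.Icc u v) ∧
          φ a ∈ Set.Ioo u v ∧ φ s ∈ Set.Ioo u v := by
        have hop : IsOpen (φ '' W)ᶜ := (hWf.image φ).isClosed.isOpen_compl
        have hmem : ∀ c ∈ Set.uIcc s a, φ c ∈ (φ '' W)ᶜ := by
          rintro c hc ⟨w, hw, hwc⟩
          rw [φ.injective hwc] at hw
          exact hs c hw hc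
        have hlo := hmem (min s a) (by simp [Set.uIcc])
        have hhi := hmem (max s a) (by simp [Set.uIcc])
        obtain ⟨u, u', -, hu1, hu2⟩ := exists_Icc_mem_subset_of_mem_nhds (hop.mem_nhds hlo)
        obtain ⟨v', v, -, hv1, hv2⟩ := exists_Icc_mem_subset_of_mem_nhds (hop.mem_nhds hhi)
        rw [Icc_mem_nhds_iff] at hu1 hv1
        refine ⟨u, v, fun w hw hwI => ?_, ⟨?_, ?_⟩, ⟨?_, ?_⟩⟩
        · rcases le_total (φ w) (φ (min s a)) with h1 | h1
          · exact hu2 ⟨hwI.1, h1.trans hu1.2.le⟩ ⟨w, hw, rfl⟩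
          rcases le_total (φ (max s a)) (φ w) with h2 | h2
          · exact hv2 ⟨hv1.1.le.trans h2, hwI.2⟩ ⟨w, hw, rfl⟩
          · exact hmem w ⟨φ.le_iff_le.1 h1, φ.le_iff_le.1 h2⟩ ⟨w, hw, rfl⟩
        · exact hu1.1.trans_le (φ.monotone (min_le_right _ _))
        · exact (φ.monotone (le_max_right _ _)).trans_lt hv1.2
        · exact hu1.1.trans_le (φ.monotone (min_le_left _ _))
        · exact (φ.monotone (le_max_left _ _)).trans_lt hv1.2
      obtain ⟨ψ, hψ, hψ'⟩ := exists_orderIso_eq_id_off_Ioo hua hus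
      have hψI : ∀ c ∈ Set.Ioo u v, ψ c ∈ Set.Ioo u v := fun c hc => by
        have h1 := ψ.strictMono hc.1
        have h2 := ψ.strictMono hc.2
        rw [hψ' u (by simp)] at h1
        rw [hψ' v (by simp)] at h2
        exact ⟨h1, h2⟩
      refine ih (φ.trans ψ) (fun i hi t => ?_) (fun i hi hi0 t hit => ?_) ?_
      · rw [hφ i hi t, OrderIso.trans_apply]
        by_cases ht : φ t ∈ Set.Ioo u v
        · by_cases hfi : f i = 0
          · have hgi : ∀ c, (g i).eval c = 0 := fun c => by
              have := hφ i hi (φ.symm c)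
              rwa [hfi, eval_zero, sign_zero, eq_comm, sign_eq_zero_iff,
                φ.apply_symm_apply] at this
            rw [hgi, hgi]
          · refine sign_eq_of_forall_ne_zero (g i).continuous fun c hc h0 => ?_
            have hcI : c ∈ Set.Icc u v :=
              Set.uIcc_subset_Icc (Set.Ioo_subset_Icc_self ht)
                (Set.Ioo_subset_Icc_self (hψI _ ht)) hc
            refine huv (φ.symm c) ⟨i, hi, hfi, ?_⟩ (by rwa [φ.apply_symm_apply])
            rw [← sign_eq_zero_iff, hφ i hi, φ.apply_symm_apply, h0, sign_zero]
        · rw [hψ' _ ht]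
      · rw [OrderIso.trans_apply, hψ' _ fun h =>
          huv t ⟨i, hi, hi0, hit⟩ (Set.Ioo_subset_Icc_self h)]
        exact hW i hi hi0 t hit
      · refine lt_of_lt_of_le (Set.ncard_lt_ncard ?_ (hbadfin φ)) (Nat.lt_succ_iff.1 hn)
        have hbad' : ∀ t, p₁.eval t = 0 → p₂.eval (ψ (φ t)) ≠ 0 → φ t ∉ Set.Ioo u v := by
          intro t ht1 ht2 ht
          have hder : ∀ c ∈ Set.uIcc a t, p₁.derivative.eval c ≠ 0 := by
            intro c hc
            refine hd0 c fun hcW => huv c hcW ?_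
            refine Set.uIcc_subset_Icc (Set.Ioo_subset_Icc_self hua)
              (Set.Ioo_subset_Icc_self ht) ?_
            rw [Set.mem_uIcc] at hc ⊢
            simpa using hc
          have := sign_eval_sub_eval hder
          rw [ht1, ha1, sub_zero, sign_zero, eq_comm, mul_eq_zero, sign_eq_zero_iff,
            sign_eq_zero_iff, sub_eq_zero] at this
          rcases this with h | rfl
          · exact hder t Set.right_mem_uIcc h
          · exact ht2 (by rw [hψ, hs0])
        refine (Set.ssubset_iff_of_subset ?_).2 ⟨a, ⟨ha1, ha2⟩, fun h => hbad' a h.1 h.2 hua⟩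
        rintro t ⟨ht1, ht2⟩
        refine ⟨ht1, ?_⟩
        rw [OrderIso.trans_apply] at ht2
        rwa [hψ' _ (hbad' t ht1 ht2)] at ht2
    · push Not at hbad
      refine ⟨φ, hφ, fun t => ?_⟩
      by_contra hne
      have htW : t ∉ W := fun h => hne (hW' t h)
      have ht1 : p₁.eval t ≠ 0 := fun h => hne (by rw [h, hbad t h])
      obtain ⟨c, hc, hc0⟩ := exists_eval_eq_zero_of_sign_ne (p₁ := p₂) (p₂ := p₁) (φ := φ.symm)
        (W := φ '' W) (t := φ t) (hWf.image φ)
        (by rintro _ ⟨w, hw, rfl⟩; rw [φ.symm_apply_apply, hW' w hw])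
        (fun c => by rw [hd, φ.apply_symm_apply])
        (fun c hc h0 => hd0 (φ.symm c) (fun h => hc ⟨_, h, by simp⟩) (by
          rw [← sign_eq_zero_iff, hd, φ.apply_symm_apply, h0, sign_zero]))
        (by rintro ⟨w, hw, hwt⟩; exact htW (φ.injective hwt ▸ hw))
        (by rw [φ.symm_apply_apply]; exact fun h => hne h.symm)
        (by rwa [φ.symm_apply_apply])
      obtain ⟨s, rfl⟩ := φ.surjective c
      rw [φ.symm_apply_apply] at hc0
      have h1 := sign_eval_sub_eval (p := p₁) (s := s) (t := t) fun x hx =>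
        hd0 x fun hxW => hc (φ x) ⟨x, hxW, rfl⟩ (by
          rw [Set.mem_uIcc] at hx ⊢; simpa using hx)
      have h2 := sign_eval_sub_eval (p := p₂) (s := φ s) (t := φ t) fun x hx h0 => by
        refine hd0 (φ.symm x) (fun h => hc x ⟨_, h, by simp⟩ hx) ?_
        rw [← sign_eq_zero_iff, hd, φ.apply_symm_apply, h0, sign_zero]
      have h3 : SignType.sign (t - s) = SignType.sign (φ t - φ s) := by
        rcases lt_trichotomy s t with h | rfl | h
        · rw [sign_pos (by linarith), sign_pos (by linarith [φ.strictMono h])]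
        · simp
        · rw [sign_neg (by linarith), sign_neg (by linarith [φ.strictMono h])]
      rw [hc0, sub_zero, hd, h3] at h1
      rw [hbad s hc0, sub_zero] at h2
      exact hne (h1.trans h2.symm)

/-- The sign diagram of finitely many polynomials in one variable is determined, up to
reparametrization of the line, by the signs of finitely many polynomial expressions in their
coefficients. -/
theorem exists_finset_sign_diagram {A : Type*} [CommRing A] (F : Finset A[X]) :
    ∃ G : Finset A, ∀ x y : A →+* ℝ, (∀ g ∈ G, SignType.sign (x g) = SignType.sign (y g)) →
      ∃ φ : ℝ ≃o ℝ, ∀ p ∈ F, ∀ t,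
        SignType.sign (p.eval₂ x t) = SignType.sign (p.eval₂ y (φ t)) := by
  classical
  obtain ⟨m, hm⟩ : ∃ m, ∀ p ∈ F, p.natDegree ≤ m :=
    ⟨F.sup natDegree, fun p hp => Finset.le_sup (f := natDegree) hp⟩
  induction m generalizing F with
  | zero =>
    refine ⟨F.image fun p => p.coeff 0, fun x y h => ⟨OrderIso.refl ℝ, fun p hp t => ?_⟩⟩
    rw [eq_C_of_natDegree_le_zero (hm p hp), eval₂_C, eval₂_C]
    exact h _ (Finset.mem_image_of_mem _ hp)
  | succ m ihm =>
    obtain ⟨k, hk⟩ : ∃ k, (F.filter fun p => p.natDegree = m + 1).card ≤ k := ⟨_, le_rfl⟩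
    induction k generalizing F with
    | zero =>
      refine ihm F fun p hp => Nat.lt_succ_iff.1 ((hm p hp).lt_of_ne fun h => ?_)
      rw [Nat.le_zero, Finset.card_eq_zero, Finset.filter_eq_empty_iff] at hk
      exact hk hp h
    | succ k ihk =>
      by_cases hF : ∀ p ∈ F, p.natDegree ≤ m
      · exact ihm F hF
      push Not at hF
      obtain ⟨p, hpF, hpm⟩ := hF
      have hpm : p.natDegree = m + 1 := le_antisymm (hm p hpF) hpm
      have hrem : ∀ (q : A[X]) (i : ℕ), ∃ r : A[X], r.natDegree ≤ i - 1 ∧ (0 < i →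
          ∀ (x : A →+* ℝ) (t : ℝ), x (q.coeff i) ≠ 0 → (∀ j, i < j → x (q.coeff j) = 0) →
            q.eval₂ x t = 0 → SignType.sign (p.eval₂ x t) = SignType.sign (r.eval₂ x t)) := by
        intro q i
        rcases Nat.eq_zero_or_pos i with rfl | hi
        · exact ⟨0, by simp, fun h => absurd h (lt_irrefl _)⟩
        · obtain ⟨r, hr, h⟩ := exists_natDegree_lt_sign_eval₂_eq q hi p
          exact ⟨r, by omega, fun _ => h⟩
      choose rem hremdeg hrem using hrem
      have hp' : p.derivative.natDegree ≤ m := by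
        have := natDegree_derivative_le p; omega
      have hpe : p.eraseLead.natDegree ≤ m := by
        have := eraseLead_natDegree_le p; omega
      set Q := insert p.derivative (F.erase p)
      have hQ : ∀ q ∈ Q, q.natDegree ≤ m + 1 := by
        intro q hq
        rcases Finset.mem_insert.1 hq with rfl | hq
        · omega
        · exact hm q (Finset.mem_of_mem_erase hq)
      set R := (Q ×ˢ Finset.range (m + 2)).image fun z => rem z.1 z.2
      have hR : ∀ r ∈ R, r.natDegree ≤ m := by
        intro r hr
        obtain ⟨⟨q, i⟩, hqi, rfl⟩ := Finset.mem_image.1 hr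
        have h1 := hremdeg q i
        have h2 := Finset.mem_range.1 (Finset.mem_product.1 hqi).2
        simp only at h1 h2 ⊢
        omega
      obtain ⟨G, hG⟩ := ihk (insert p.eraseLead (Q ∪ R)) (by
          intro q hq
          rcases Finset.mem_insert.1 hq with rfl | hq
          · omega
          rcases Finset.mem_union.1 hq with hq | hq
          · exact hQ q hq
          · exact (hR q hq).trans (Nat.le_succ m)) (by
          have hsub : ((insert p.eraseLead (Q ∪ R)).filter fun q => q.natDegree = m + 1) ⊆
              (F.filter fun q => q.natDegree = m + 1).erase p := by
            intro q hq
            obtain ⟨hq, hqm⟩ := Finset.mem_filter.1 hq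
            rcases Finset.mem_insert.1 hq with rfl | hq
            · omega
            rcases Finset.mem_union.1 hq with hq | hq
            · rcases Finset.mem_insert.1 hq with rfl | hq
              · omega
              · rw [Finset.mem_erase] at hq
                exact Finset.mem_erase.2 ⟨hq.1, Finset.mem_filter.2 ⟨hq.2, hqm⟩⟩
            · have := hR q hq
              omega
          have h := Finset.card_le_card hsub
          rw [Finset.card_erase_of_mem (Finset.mem_filter.2 ⟨hpF, hpm⟩)] at h
          omega)
      refine ⟨insert p.leadingCoeff
        (G ∪ (Q ×ˢ Finset.range (m + 2)).image fun z => z.1.coeff z.2), fun x y h => ?_⟩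
      have hlead := h _ (Finset.mem_insert_self _ _)
      have hcoeff : ∀ q ∈ Q, ∀ i, SignType.sign (x (q.coeff i)) = SignType.sign (y (q.coeff i)) := by
        intro q hq i
        rcases lt_or_ge i (m + 2) with hi | hi
        · exact h _ (Finset.mem_insert_of_mem (Finset.mem_union_right _ (Finset.mem_image.2
            ⟨(q, i), Finset.mem_product.2 ⟨hq, Finset.mem_range.2 hi⟩, rfl⟩)))
        · rw [coeff_eq_zero_of_natDegree_lt (by have := hQ q hq; omega), map_zero x, map_zero y]
      obtain ⟨φ, hφ⟩ := hG x y fun g hg =>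
        h g (Finset.mem_insert_of_mem (Finset.mem_union_left _ hg))
      have hφQ : ∀ q ∈ Q, ∀ t, SignType.sign (q.eval₂ x t) = SignType.sign (q.eval₂ y (φ t)) :=
        fun q hq => hφ q (Finset.mem_insert_of_mem (Finset.mem_union_left _ hq))
      suffices H : ∃ ψ : ℝ ≃o ℝ,
          (∀ q ∈ Q, ∀ t, SignType.sign (q.eval₂ x t) = SignType.sign (q.eval₂ y (ψ t))) ∧
          ∀ t, SignType.sign (p.eval₂ x t) = SignType.sign (p.eval₂ y (ψ t)) by
        obtain ⟨ψ, h1, h2⟩ := H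
        refine ⟨ψ, fun q hq => ?_⟩
        rcases eq_or_ne q p with rfl | hqp
        · exact h2
        · exact h1 q (Finset.mem_insert_of_mem (Finset.mem_erase.2 ⟨hqp, hq⟩))
      by_cases hx0 : x p.leadingCoeff = 0
      · have hy0 : y p.leadingCoeff = 0 := by
          rwa [← sign_eq_zero_iff, ← hlead, sign_eq_zero_iff]
        have key : ∀ z : A →+* ℝ, z p.leadingCoeff = 0 → ∀ t,
            p.eval₂ z t = p.eraseLead.eval₂ z t := by
          intro z hz t
          conv_lhs => rw [← eraseLead_add_C_mul_X_pow p]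
          rw [eval₂_add, eval₂_mul, eval₂_C, hz, zero_mul, add_zero]
        refine ⟨φ, hφQ, fun t => ?_⟩
        rw [key x hx0, key y hy0]
        exact hφ _ (Finset.mem_insert_self _ _) t
      · have hp0 : (p.map x).derivative ≠ 0 := by
          intro h0
          have := congrArg (fun r => coeff r m) h0
          simp only [coeff_derivative, coeff_map, coeff_zero] at this
          rw [← hpm, coeff_natDegree, mul_eq_zero] at this
          rcases this with h | h
          · exact hx0 h
          · exact absurd h (by positivity)
        have hzero : ∀ q ∈ Q, q.map x ≠ 0 → ∀ t, (q.map x).eval t = 0 →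
            SignType.sign ((p.map x).eval t) = SignType.sign ((p.map y).eval (φ t)) := by
          simp only [eval_map]
          intro q hq hq0 t hqt
          set i := (q.map x).natDegree with hi
          have him : i ≤ m + 1 := natDegree_map_le.trans (hQ q hq)
          have hi0 : 0 < i := by
            refine Nat.pos_of_ne_zero fun h0 => hq0 ?_
            have e := eq_C_of_natDegree_eq_zero h0
            rw [← eval_map, e, eval_C] at hqt
            rw [e, hqt, C_0]
          have hxi : x (q.coeff i) ≠ 0 := by
            rw [← coeff_map, hi, coeff_natDegree]
            exact leadingCoeff_ne_zero.2 hq0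
          have hxj : ∀ j, i < j → x (q.coeff j) = 0 := fun j hj => by
            rw [← coeff_map]; exact coeff_eq_zero_of_natDegree_lt hj
          have hmem : rem q i ∈ insert p.eraseLead (Q ∪ R) :=
            Finset.mem_insert_of_mem (Finset.mem_union_right _ (Finset.mem_image.2
              ⟨(q, i), Finset.mem_product.2 ⟨hq, Finset.mem_range.2 (by omega)⟩, rfl⟩))
          rw [hrem q i hi0 x t hxi hxj hqt, hφ _ hmem t]
          refine (hrem q i hi0 y (φ t) ?_ (fun j hj => ?_) ?_).symm
          · rwa [ne_eq, ← sign_eq_zero_iff, ← hcoeff q hq, sign_eq_zero_iff]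
          · rw [← sign_eq_zero_iff, ← hcoeff q hq, sign_eq_zero_iff]; exact hxj j hj
          · rw [← sign_eq_zero_iff, ← hφQ q hq, sign_eq_zero_iff]; exact hqt
        obtain ⟨ψ, h1, h2⟩ := exists_orderIso_sign_eval_eq Q (fun q => q.map x) (fun q => q.map y)
          (p.map x) (p.map y) (Finset.mem_insert_self _ _) (derivative_map p x).symm
          (derivative_map p y).symm hp0 φ (by simpa only [eval_map] using hφQ) hzero
        simp only [eval_map] at h1 h2
        exact ⟨ψ, h1, h2⟩

/-- A condition on the real points of `A` is sign-determined if it depends only on the signs of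
finitely many elements of `A`; this is semialgebraicity. -/
def IsSignDetermined {A : Type*} [CommRing A] (S : (A →+* ℝ) → Prop) : Prop :=
  ∃ G : Finset A, ∀ x y : A →+* ℝ,
    (∀ g ∈ G, SignType.sign (x g) = SignType.sign (y g)) → S x → S y

/-- The Tarski–Seidenberg projection theorem for one variable. -/
theorem IsSignDetermined.exists_eval₂ {A : Type*} [CommRing A] {S : (A[X] →+* ℝ) → Prop}
    (hS : IsSignDetermined S) :
    IsSignDetermined fun x : A →+* ℝ => ∃ t : ℝ, S (eval₂RingHom x t) := by
  obtain ⟨F, hF⟩ := hS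
  obtain ⟨G, hG⟩ := exists_finset_sign_diagram F
  refine ⟨G, fun x y h ⟨t, ht⟩ => ?_⟩
  obtain ⟨φ, hφ⟩ := hG x y h
  exact ⟨φ t, hF _ _ (fun p hp => hφ p hp t) ht⟩

theorem IsSignDetermined.comp {A B : Type*} [CommRing A] [CommRing B] {S : (A →+* ℝ) → Prop}
    (hS : IsSignDetermined S) (f : A →+* B) :
    IsSignDetermined fun x : B →+* ℝ => S (x.comp f) := by
  classical
  obtain ⟨G, hG⟩ := hS
  exact ⟨G.image f, fun x y h => hG _ _ fun g hg => h _ (Finset.mem_image_of_mem f hg)⟩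

/-- The Tarski–Seidenberg projection theorem. -/
theorem IsSignDetermined.exists_eval₂Hom {A : Type*} [CommRing A] (n : ℕ)
    {S : (MvPolynomial (Fin n) A →+* ℝ) → Prop} (hS : IsSignDetermined S) :
    IsSignDetermined fun x : A →+* ℝ => ∃ v : Fin n → ℝ, S (MvPolynomial.eval₂Hom x v) := by
  induction n with
  | zero =>
    have h := hS.comp (MvPolynomial.eval₂Hom (RingHom.id A) Fin.elim0)
    have key : ∀ (x : A →+* ℝ) (v : Fin 0 → ℝ), MvPolynomial.eval₂Hom x v =
        x.comp (MvPolynomial.eval₂Hom (RingHom.id A) Fin.elim0) := fun x v =>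
      MvPolynomial.ringHom_ext (fun a => by simp) fun i => i.elim0
    simpa only [key, exists_const] using h
  | succ n ih =>
    have h := ih (hS.comp (MvPolynomial.finSuccEquiv A n).toRingEquiv.toRingHom).exists_eval₂
    have key : ∀ (x : A →+* ℝ) (v : Fin n → ℝ) (t : ℝ),
        (eval₂RingHom (MvPolynomial.eval₂Hom x v) t).comp
          (MvPolynomial.finSuccEquiv A n).toRingEquiv.toRingHom =
        MvPolynomial.eval₂Hom x (Fin.cons t v : Fin (n + 1) → ℝ) := by
      intro x v t
      refine MvPolynomial.ringHom_ext (fun a => ?_) fun i => ?_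
      · simp [MvPolynomial.finSuccEquiv_apply]
      · refine Fin.cases ?_ (fun j => ?_) i <;> simp [MvPolynomial.finSuccEquiv_apply]
    simp only [key] at h
    convert h using 3 with x
    constructor
    · rintro ⟨v, hv⟩
      exact ⟨Fin.tail v, v 0, by rwa [Fin.cons_self_tail]⟩
    · rintro ⟨v, t, hv⟩
      exact ⟨_, hv⟩

/-- A subset of the line described by sign conditions on polynomials of total degree at most `M` is
a union of at most `2 * M + 1` intervals. -/
theorem exists_ordConnected_iUnion_eq {ι : Type*} (G : Finset ι) (f : ι → ℝ[X]) {M : ℕ}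
    (hM : ∑ i ∈ G, (f i).natDegree ≤ M) (S : Set ℝ)
    (hS : ∀ s t, (∀ i ∈ G, SignType.sign ((f i).eval s) = SignType.sign ((f i).eval t)) →
      s ∈ S → t ∈ S) :
    ∃ (m : ℕ) (J : Fin m → Set ℝ), m ≤ 2 * M + 1 ∧ (∀ j, (J j).OrdConnected) ∧ S = ⋃ j, J j := by
  classical
  set Z : Finset ℝ := G.biUnion fun i => (f i).roots.toFinset
  have hZ : Z.card ≤ M := by
    refine Finset.card_biUnion_le.trans ((Finset.sum_le_sum fun i _ => ?_).trans hM)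
    exact (Multiset.toFinset_card_le _).trans (card_roots' _)
  let r : ℝ → ℕ := fun t => (Z.filter (· < t)).card + (Z.filter (· ≤ t)).card
  have hlt : ∀ {s t : ℝ}, s ≤ t → Z.filter (· < s) ⊆ Z.filter (· < t) := fun h =>
    Finset.monotone_filter_right _ fun _ _ hz => lt_of_lt_of_le hz h
  have hle : ∀ {s t : ℝ}, s ≤ t → Z.filter (· ≤ s) ⊆ Z.filter (· ≤ t) := fun h =>
    Finset.monotone_filter_right _ fun _ _ hz => le_trans hz h
  have hr : Monotone r := fun s t hst =>
    add_le_add (Finset.card_le_card (hlt hst)) (Finset.card_le_card (hle hst))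
  have hfree : ∀ {s t : ℝ}, s < t → r s = r t → ∀ z ∈ Z, z ∉ Set.Icc s t := by
    rintro s t hst hrst z hz ⟨hsz, hzt⟩
    have h1 := Finset.card_le_card (hlt hst.le)
    have h2 := Finset.card_le_card (hle hst.le)
    simp only [r] at hrst
    have e1 := Finset.eq_of_subset_of_card_le (hlt hst.le) (by omega)
    have e2 := Finset.eq_of_subset_of_card_le (hle hst.le) (by omega)
    rcases hzt.lt_or_eq with h | rfl
    · have : z ∈ Z.filter (· < s) := by rw [e1]; exact Finset.mem_filter.2 ⟨hz, h⟩
      exact absurd (Finset.mem_filter.1 this).2 (not_lt.2 hsz)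
    · have : z ∈ Z.filter (· ≤ s) := by rw [e2]; exact Finset.mem_filter.2 ⟨hz, le_rfl⟩
      exact absurd (Finset.mem_filter.1 this).2 (not_le.2 hst)
  have hsign : ∀ {s t : ℝ}, r s = r t → ∀ i ∈ G,
      SignType.sign ((f i).eval s) = SignType.sign ((f i).eval t) := by
    intro s t hrst i hi
    by_cases hf : f i = 0
    · simp [hf]
    rcases eq_or_ne s t with rfl | hne
    · rfl
    refine sign_eq_of_forall_ne_zero (f i).continuous fun u hu h0 => ?_
    have huZ : u ∈ Z := Finset.mem_biUnion.2
      ⟨i, hi, Multiset.mem_toFinset.2 ((mem_roots hf).2 h0)⟩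
    rcases lt_or_gt_of_ne hne with h | h
    · rw [Set.uIcc_of_le h.le] at hu
      exact hfree h hrst u huZ hu
    · rw [Set.uIcc_of_ge h.le] at hu
      exact hfree h hrst.symm u huZ hu
  refine ⟨2 * M + 1, fun j => {t | t ∈ S ∧ r t = j}, le_rfl, fun j => ⟨?_⟩, ?_⟩
  · rintro s ⟨hs, hsj⟩ t ⟨-, htj⟩ u ⟨hsu, hut⟩
    have hu : r u = j := le_antisymm (htj ▸ hr hut) (hsj ▸ hr hsu)
    exact ⟨hS s u (hsign (hsj.trans hu.symm)) hs, hu⟩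
  · ext t
    have : r t < 2 * M + 1 := by
      have h1 := Finset.card_filter_le Z (· < t)
      have h2 := Finset.card_filter_le Z (· ≤ t)
      simp only [r]; omega
    simp only [Set.mem_iUnion, Set.mem_ofPred_eq]
    exact ⟨fun ht => ⟨⟨r t, this⟩, ht, rfl⟩, fun ⟨_, ht, _⟩ => ht⟩

/-- If `det DP` does not vanish on the closed unit cylinder `T̄`, then the preimage under a
polynomial curve `γ` of `P(T)` is a union of boundedly many intervals. -/
theorem stmt13 (d N : ℕ) :
    ∃ C : ℕ, ∀ (P : Fin (d + 1) → MvPolynomial (Fin (d + 1)) ℝ)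
      (γ : Fin (d + 1) → Polynomial ℝ),
      (∀ i, (P i).totalDegree ≤ N) → (∀ i, (γ i).natDegree ≤ N) →
      (∀ x : Fin (d + 1) → ℝ, (∑ i : Fin d, x i.castSucc ^ 2) ≤ 1 →
        Matrix.det (Matrix.of fun i j =>
          MvPolynomial.eval x (MvPolynomial.pderiv j (P i))) ≠ 0) →
      ∃ (m : ℕ) (J : Fin m → Set ℝ), m ≤ C ∧ (∀ j, (J j).OrdConnected) ∧
        (fun t i => Polynomial.eval t (γ i)) ⁻¹'
            ((fun x i => MvPolynomial.eval x (P i)) ''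
              {x : Fin (d + 1) → ℝ | (∑ i : Fin d, x i.castSucc ^ 2) < 1}) =
          ⋃ j, J j := by
  classical
  -- The ring `K` of functions on the parameter space contains the generic coefficients.
  let K := (Fin (d + 1) → MvPolynomial (Fin (d + 1)) ℝ) × (Fin (d + 1) → ℝ[X]) → ℝ
  let B : Finset (Fin (d + 1) →₀ ℕ) := Finset.Icc 0 (Finsupp.equivFunOnFinite.symm fun _ => N)
  let genP : Fin (d + 1) → MvPolynomial (Fin (d + 1)) K[X] := fun i =>
    ∑ m ∈ B, MvPolynomial.monomial m (C fun π => (π.1 i).coeff m)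
  let genγ : Fin (d + 1) → K[X] := fun i =>
    ∑ k ∈ Finset.range (N + 1), C (fun π => (π.2 i).coeff k) * X ^ k
  let ρ : MvPolynomial (Fin (d + 1)) K[X] :=
    1 - ∑ i : Fin d, MvPolynomial.X i.castSucc ^ 2
  have hS : IsSignDetermined (A := MvPolynomial (Fin (d + 1)) K[X]) fun z =>
      0 < z ρ ∧ ∀ i, z (genP i - MvPolynomial.C (genγ i)) = 0 := by
    refine ⟨insert ρ (Finset.univ.image fun i => genP i - MvPolynomial.C (genγ i)),
      fun x y h => ?_⟩
    rintro ⟨h1, h2⟩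
    constructor
    · rwa [← sign_eq_one_iff, ← h _ (Finset.mem_insert_self _ _), sign_eq_one_iff]
    · intro i
      rw [← sign_eq_zero_iff, ← h _ (Finset.mem_insert_of_mem
        (Finset.mem_image_of_mem _ (Finset.mem_univ i))), sign_eq_zero_iff]
      exact h2 i
  obtain ⟨G, hG⟩ := hS.exists_eval₂Hom (d + 1)
  refine ⟨2 * (∑ g ∈ G, g.natDegree) + 1, fun P γ hP hγ _ => ?_⟩
  let e : K →+* ℝ := Pi.evalRingHom (fun _ => ℝ) (P, γ)
  have he : ∀ f, e f = f (P, γ) := fun _ => rfl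
  have hgenP : ∀ (t : ℝ) (v : Fin (d + 1) → ℝ) (i : Fin (d + 1)),
      MvPolynomial.eval₂Hom (eval₂RingHom e t) v (genP i) = MvPolynomial.eval v (P i) := by
    intro t v i
    have hsub : (P i).support ⊆ B := fun m hm => by
      refine Finset.mem_Icc.2 ⟨zero_le, fun j => ?_⟩
      exact (MvPolynomial.monomial_le_degreeOf j hm).trans
        ((MvPolynomial.degreeOf_le_totalDegree _ _).trans (hP i))
    rw [MvPolynomial.eval_eq', map_sum, Finset.sum_subset hsub]
    · refine Finset.sum_congr rfl fun m _ => ?_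
      rw [MvPolynomial.coe_eval₂Hom, MvPolynomial.eval₂_monomial, Finsupp.prod_fintype _ _ (by simp)]
      simp [he]
    · intro m _ hm
      rw [MvPolynomial.notMem_support_iff.1 hm, zero_mul]
  have hgenγ : ∀ (t : ℝ) (i : Fin (d + 1)), eval₂RingHom e t (genγ i) = (γ i).eval t := by
    intro t i
    rw [eval_eq_sum_range' (Nat.lt_succ_of_le (hγ i)), map_sum]
    simp [he]
  refine exists_ordConnected_iUnion_eq G (fun g => g.map e)
    (Finset.sum_le_sum fun g _ => natDegree_map_le) _ fun s t hst hs => ?_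
  have key : ∀ t : ℝ, (t ∈ (fun t i => Polynomial.eval t (γ i)) ⁻¹'
      ((fun x i => MvPolynomial.eval x (P i)) ''
        {x : Fin (d + 1) → ℝ | (∑ i : Fin d, x i.castSucc ^ 2) < 1})) ↔
      ∃ v : Fin (d + 1) → ℝ, 0 < MvPolynomial.eval₂Hom (eval₂RingHom e t) v ρ ∧
        ∀ i, MvPolynomial.eval₂Hom (eval₂RingHom e t) v
          (genP i - MvPolynomial.C (genγ i)) = 0 := by
    intro t
    simp only [Set.mem_preimage, Set.mem_image, Set.mem_ofPred_eq]
    refine exists_congr fun v => and_congr ?_ ?_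
    · simp [ρ]
    · rw [funext_iff]
      refine forall_congr' fun i => ?_
      rw [map_sub, hgenP, MvPolynomial.coe_eval₂Hom, MvPolynomial.eval₂_C, hgenγ, sub_eq_zero]
  rw [key] at hs ⊢
  refine hG (eval₂RingHom e s) (eval₂RingHom e t) (fun g hg => ?_) hs
  simpa only [eval_map, coe_eval₂RingHom] using hst g hg
end
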